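/- arXiv:math/0304213 — 2 statements merged into one kernel-verified Lean document; each statement's English description precedes it below -/
import Mathlib

section
/- For every integer n ≥ 3: if n is odd then s_n ≡ 2 (mod 2^{(n−1)/2}), and if n is even then s_n ≡ −2 (mod 2^{n/2}). -/
def IsPermBlock {n : ℕ} (π : Equiv.Perm (Fin n)) (B : Finset (Fin n)) : Prop :=
  B.Nonempty ∧ (∃ i j : Fin n, B = Finset.Icc i j) ∧
    ∃ a b : Fin n, B.image π = Finset.Icc a b

def IsSimplePerm {n : ℕ} (π : Equiv.Perm (Fin n)) : Prop :=
  ∀ B : Finset (Fin n), IsPermBlock π B → B.card = 1 ∨ B = Finset.univ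

noncomputable def simpleCount (n : ℕ) : ℕ :=
  Nat.card {π : Equiv.Perm (Fin n) // IsSimplePerm π}

namespace SimpleCong

open Equiv

/-- Blocks phrased with order-connected sets (the empty set is allowed). -/
def Blk {n : ℕ} (π : Perm (Fin n)) (B : Set (Fin n)) : Prop :=
  B.OrdConnected ∧ (π '' B).OrdConnected

lemma ordConnected_iff_Icc {n : ℕ} (B : Finset (Fin n)) (hB : B.Nonempty) :
    (B : Set (Fin n)).OrdConnected ↔ ∃ i j, B = Finset.Icc i j := by
  constructor
  · intro h
    refine ⟨B.min' hB, B.max' hB, ?_⟩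
    ext x
    simp only [Finset.mem_Icc]
    constructor
    · intro hx
      exact ⟨B.min'_le x hx, B.le_max' x hx⟩
    · intro hx
      exact h.out (B.min'_mem hB) (B.max'_mem hB) hx
  · rintro ⟨i, j, rfl⟩
    rw [Finset.coe_Icc]
    exact Set.ordConnected_Icc

lemma isPermBlock_iff {n : ℕ} (π : Perm (Fin n)) (B : Finset (Fin n)) :
    IsPermBlock π B ↔ B.Nonempty ∧ Blk π (B : Set (Fin n)) := by
  unfold IsPermBlock Blk
  refine and_congr_right fun hB => ?_
  rw [← ordConnected_iff_Icc B hB, ← ordConnected_iff_Icc (B.image π) (hB.image π),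
    Finset.coe_image]

lemma isSimplePerm_iff {n : ℕ} (π : Perm (Fin n)) :
    IsSimplePerm π ↔ ∀ B : Set (Fin n), Blk π B → B.Subsingleton ∨ B = Set.univ := by
  classical
  constructor
  · intro h B hB
    rcases B.eq_empty_or_nonempty with rfl | hne
    · left; exact Set.subsingleton_empty
    · have := h B.toFinset (by
        rw [isPermBlock_iff]; simpa using ⟨hne, hB⟩)
      rcases this with h1 | h1
      · left
        rw [Finset.card_eq_one] at h1
        obtain ⟨a, ha⟩ := h1
        intro x hx y hy
        have hx' : x ∈ B.toFinset := by simpa using hx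
        have hy' : y ∈ B.toFinset := by simpa using hy
        rw [ha] at hx' hy'
        simp at hx' hy'
        rw [hx', hy']
      · right
        simpa using h1
  · intro h B hB
    rw [isPermBlock_iff] at hB
    rcases h B hB.2 with h1 | h1
    · left
      apply le_antisymm
      · rw [Finset.card_le_one]
        intro a ha b hb
        exact h1 ha hb
      · exact hB.1.card_pos
    · right
      simpa using h1

/-- The block index of a position, for the cut set `D`. -/
def cf (n : ℕ) (D : Finset ℕ) (i : Fin n) : Fin (D.card + 1) :=
  ⟨(D.filter (fun d => d ≤ (i : ℕ))).card, Nat.lt_succ_of_le (Finset.card_filter_le _ _)⟩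

lemma cf_mono (n : ℕ) (D : Finset ℕ) : Monotone (cf n D) := by
  intro i j hij
  rw [Fin.le_def]
  apply Finset.card_le_card
  intro d hd
  simp only [Finset.mem_filter] at hd ⊢
  exact ⟨hd.1, hd.2.trans hij⟩

lemma cf_lt_of {n : ℕ} {D : Finset ℕ} {i j : Fin n} {d : ℕ} (hd : d ∈ D) (h1 : (i : ℕ) < d)
    (h2 : d ≤ (j : ℕ)) : cf n D i < cf n D j := by
  rw [Fin.lt_def]
  apply Finset.card_lt_card
  rw [Finset.ssubset_iff_of_subset]
  · exact ⟨d, by simp [hd, h2], by simp [h1]⟩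
  · intro d hd
    simp only [Finset.mem_filter] at hd ⊢
    exact ⟨hd.1, by omega⟩

lemma cf_eq_iff {n : ℕ} {D : Finset ℕ} {i j : Fin n} :
    cf n D i = cf n D j ↔ ∀ d ∈ D, d ≤ (i : ℕ) ↔ d ≤ (j : ℕ) := by
  constructor
  · intro h d hd
    constructor
    · intro h1
      by_contra h2
      exact (cf_lt_of hd (not_le.mp h2) h1).ne h.symm
    · intro h1
      by_contra h2
      exact (cf_lt_of hd (not_le.mp h2) h1).ne h
  · intro h
    apply Fin.ext
    show (D.filter _).card = (D.filter _).card
    rw [Finset.filter_congr h]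

lemma cf_surj {n : ℕ} (hn : 1 ≤ n) {D : Finset ℕ} (hD : D ⊆ Finset.Icc 1 (n - 1)) :
    Function.Surjective (cf n D) := by
  intro j
  rcases Nat.eq_zero_or_pos (j : ℕ) with h0 | h0
  · refine ⟨⟨0, hn⟩, ?_⟩
    apply Fin.ext
    rw [h0]
    show (D.filter _).card = 0
    rw [Finset.card_eq_zero, Finset.filter_eq_empty_iff]
    intro d hd
    have := Finset.mem_Icc.mp (hD hd)
    simp; omega
  · have key := Finset.surjOn_of_injOn_of_card_le (s := D) (t := Finset.Icc 1 D.card)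
      (fun d => (D.filter (fun e => e ≤ d)).card) (by
        intro d hd
        simp only [Finset.coe_Icc, Set.mem_Icc]
        refine ⟨?_, Finset.card_filter_le _ _⟩
        exact Finset.card_pos.mpr ⟨d, by simpa using hd⟩) (by
        have key2 : ∀ d ∈ D, ∀ e ∈ D, d < e →
            (D.filter (fun x => x ≤ d)).card < (D.filter (fun x => x ≤ e)).card := by
          intro d hd e he hde
          apply Finset.card_lt_card
          rw [Finset.ssubset_iff_of_subset]
          · exact ⟨e, by simp [he], by simp [hde]⟩
          · intro x hx
            simp only [Finset.mem_filter] at hx ⊢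
            exact ⟨hx.1, by omega⟩
        intro d hd e he hde
        simp only at hde
        rcases lt_trichotomy d e with h | h | h
        · exact absurd hde (key2 d hd e he h).ne
        · exact h
        · exact absurd hde.symm (key2 e he d hd h).ne) (by simp)
    have hj : (j : ℕ) ∈ (Finset.Icc 1 D.card : Finset ℕ) := by
      simp; omega
    obtain ⟨d, hd, hdj⟩ := key hj
    have := Finset.mem_Icc.mp (hD hd)
    exact ⟨⟨d, by omega⟩, Fin.ext hdj⟩

/-- `π` inflates `σ` along the cut set `D`. -/
def R {n : ℕ} (D : Finset ℕ) (σ : Perm (Fin (D.card + 1))) (π : Perm (Fin n)) : Prop :=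
  Monotone (σ ∘ cf n D ∘ ⇑π⁻¹)

lemma R.le {n : ℕ} {D : Finset ℕ} {σ : Perm (Fin (D.card + 1))} {π : Perm (Fin n)}
    (h : R D σ π) {i j : Fin n} (hij : π i ≤ π j) : σ (cf n D i) ≤ σ (cf n D j) := by
  have := h hij
  simpa using this

lemma R_iff {n : ℕ} {D : Finset ℕ} {σ : Perm (Fin (D.card + 1))} {π : Perm (Fin n)} :
    R D σ π ↔ ∀ i j, π i ≤ π j → σ (cf n D i) ≤ σ (cf n D j) := by
  constructor
  · intro h i j hij
    exact h.le hij
  · intro h a b hab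
    apply h
    simpa using hab

/-- Number of fibre-preserving permutations. -/
noncomputable def P (n : ℕ) (D : Finset ℕ) : ℕ :=
  ∏ j : Fin (D.card + 1), (Fintype.card {a : Fin n // cf n D a = j}).factorial

open Classical in
lemma card_R (n : ℕ) (D : Finset ℕ) (σ : Perm (Fin (D.card + 1))) :
    (Finset.univ.filter (fun π : Perm (Fin n) => R D σ π)).card = P n D := by
  unfold P
  rw [← DomMulAct.stabilizer_card (cf n D), ← Fintype.card_subtype]
  set h : Fin n → Fin (D.card + 1) := σ ∘ cf n D with hh
  apply Fintype.card_congr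
  refine (Equiv.subtypeEquiv ((Equiv.inv (Perm (Fin n))).trans
    (Equiv.mulRight (Tuple.sort h)⁻¹)) ?_)
  intro π
  have : R D σ π ↔ Monotone (h ∘ ⇑π⁻¹) := Iff.rfl
  rw [this, ← Tuple.comp_sort_eq_comp_iff_monotone]
  simp only [Equiv.trans_apply, Equiv.inv_apply, Equiv.coe_mulRight]
  constructor
  · intro e
    funext x
    have := congrFun e ((Tuple.sort h)⁻¹ x)
    simp [hh] at this
    simpa using this
  · intro e
    funext x
    have := congrFun e (Tuple.sort h x)
    simp at this
    simp [hh, this]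

/-- Good cuts. -/
def G {n : ℕ} (π : Perm (Fin n)) : Finset ℕ :=
  (Finset.Icc 1 (n - 1)).filter (fun k => ∀ i : Fin n, k ≤ (i : ℕ) ↔ k ≤ (π i : ℕ))

lemma R_one_iff {n : ℕ} {D : Finset ℕ} (hD : D ⊆ Finset.Icc 1 (n - 1)) (π : Perm (Fin n)) :
    R D 1 π ↔ D ⊆ G π := by
  have e1 : R D 1 π ↔ Monotone (cf n D ∘ ⇑π⁻¹) := Iff.rfl
  rw [e1]
  constructor
  · intro h d hd
    have e2 : cf n D ∘ ⇑π⁻¹ = cf n D ∘ ⇑(1 : Perm (Fin n)) :=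
      Tuple.unique_monotone h (by simpa using cf_mono n D)
    unfold G
    rw [Finset.mem_filter]
    refine ⟨hD hd, fun i => ?_⟩
    have := congrFun e2 (π i)
    simp at this
    exact (cf_eq_iff.mp this) d hd
  · intro h
    have : cf n D ∘ ⇑π⁻¹ = cf n D := by
      funext x
      rw [Function.comp_apply, cf_eq_iff]
      intro d hd
      have := h hd
      unfold G at this
      rw [Finset.mem_filter] at this
      have := this.2 (π⁻¹ x)
      simpa using this
    rw [this]
    exact cf_mono n D

lemma R_rev_iff {n : ℕ} {D : Finset ℕ} (hD : D ⊆ Finset.Icc 1 (n - 1)) (π : Perm (Fin n)) :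
    R D Fin.revPerm π ↔ D ⊆ G (Fin.revPerm * π) := by
  rw [← R_one_iff hD, R_iff, R_iff]
  simp only [Fin.revPerm_apply, Fin.rev_le_rev, Perm.coe_mul, Function.comp_apply, Perm.coe_one,
    id]
  exact forall_comm

lemma alt_sum (S : Finset ℕ) :
    ∑ D ∈ S.powerset.erase ∅, (-1 : ℤ) ^ (D.card + 1) = if S.Nonempty then 1 else 0 := by
  have h := Finset.sum_powerset_neg_one_pow_card (x := S)
  rw [← Finset.add_sum_erase _ _ (Finset.empty_mem_powerset S)] at h
  simp only [pow_succ, ← Finset.sum_mul]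
  rcases S.eq_empty_or_nonempty with rfl | hS
  · simp
  · have h2 : S ≠ ∅ := hS.ne_empty
    simp only [h2, if_false, Finset.card_empty, pow_zero] at h
    rw [if_pos hS]
    linarith

end SimpleCong

namespace SimpleCong

open Equiv

lemma ordConnected_image {α β : Type*} [LinearOrder α] [LinearOrder β] {f : α → β}
    (hf : Monotone f) (hs : Function.Surjective f) {s : Set α} (h : s.OrdConnected) :
    (f '' s).OrdConnected := by
  constructor
  rintro _ ⟨a, ha, rfl⟩ _ ⟨b, hb, rfl⟩ y ⟨h1, h2⟩
  obtain ⟨c, rfl⟩ := hs y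
  rcases lt_or_ge c a with h3 | h3
  · exact ⟨a, ha, le_antisymm h1 (hf h3.le)⟩
  · rcases lt_or_ge b c with h4 | h4
    · exact ⟨b, hb, le_antisymm (hf h4.le) h2⟩
    · exact ⟨c, h.out ha hb ⟨h3, h4⟩, rfl⟩

lemma side {α : Type*} [LinearOrder α] {s : Set α} (h : s.OrdConnected) {x : α} (hx : x ∉ s) :
    (∀ b ∈ s, x < b) ∨ (∀ b ∈ s, b < x) := by
  by_contra! hc
  obtain ⟨⟨a, ha, ha'⟩, ⟨b, hb, hb'⟩⟩ := hc
  exact hx (h.out ha hb ⟨ha', hb'⟩)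

section

variable {n : ℕ} {D : Finset ℕ} {σ : Perm (Fin (D.card + 1))} {π : Perm (Fin n)}

lemma blk_fwd (hs : Function.Surjective (cf n D)) (h : R D σ π) {B : Set (Fin n)}
    (hB : Blk π B) : Blk σ (cf n D '' B) := by
  refine ⟨ordConnected_image (cf_mono n D) hs hB.1, ?_⟩
  have h1 := ordConnected_image h
    (σ.surjective.comp (hs.comp (π⁻¹ : Perm (Fin n)).surjective)) hB.2
  have e : (σ ∘ cf n D ∘ ⇑π⁻¹) ∘ ⇑π = σ ∘ cf n D := by
    funext x
    simp
  rw [← Set.image_comp, e] at h1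
  rwa [← Set.image_comp]

lemma blk_bwd (h : R D σ π) {B : Set (Fin (D.card + 1))}
    (hB : Blk σ B) : Blk π (cf n D ⁻¹' B) := by
  refine ⟨hB.1.preimage_mono (cf_mono n D), ?_⟩
  have h1 := hB.2.preimage_mono h
  convert h1 using 1
  ext y
  simp [Equiv.image_eq_preimage_symm]

lemma compl_end {m : ℕ} {e : Fin (m + 1)} (he : e = 0 ∨ e = Fin.last m) :
    ({e}ᶜ : Set (Fin (m + 1))).OrdConnected := by
  constructor
  intro a ha b hb c hc hce
  simp only [Set.mem_compl_iff, Set.mem_singleton_iff] at ha hb hce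
  subst hce
  rcases he with rfl | rfl
  · exact ha (Fin.le_zero_iff.mp hc.1)
  · exact hb (Fin.last_le_iff.mp hc.2)

lemma simple_end {m : ℕ} (hm : 2 ≤ m) {σ : Perm (Fin (m + 1))} (hσ : IsSimplePerm σ)
    {e : Fin (m + 1)} (he : e = 0 ∨ e = Fin.last m) (he' : σ e = 0 ∨ σ e = Fin.last m) :
    False := by
  rw [isSimplePerm_iff] at hσ
  have hb : Blk σ ({e}ᶜ) := by
    refine ⟨compl_end he, ?_⟩
    rw [Set.image_compl_eq σ.bijective, Set.image_singleton]
    exact compl_end he'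
  rcases hσ _ hb with h | h
  · have : ∃ a b : Fin (m + 1), a ≠ e ∧ b ≠ e ∧ a ≠ b := by
      rcases he with rfl | rfl
      · exact ⟨⟨1, by omega⟩, ⟨2, by omega⟩, by simp [Fin.ext_iff], by simp [Fin.ext_iff],
          by simp [Fin.ext_iff]⟩
      · exact ⟨⟨0, by omega⟩, ⟨1, by omega⟩, by simp [Fin.ext_iff]; omega,
          by simp [Fin.ext_iff]; omega, by simp [Fin.ext_iff]⟩
    obtain ⟨a, b, ha, hb, hab⟩ := this
    exact hab (h ha hb)
  · have : e ∈ ({e}ᶜ : Set (Fin (m + 1))) := by rw [h]; trivial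
    exact this rfl

lemma image_ne_univ (hm : 2 ≤ D.card) (hσ : IsSimplePerm σ) (h : R D σ π)
    {B : Set (Fin n)} (hB : Blk π B) (hne : B ≠ Set.univ) : cf n D '' B ≠ Set.univ := by
  intro hu
  obtain ⟨x, hx⟩ := (Set.ne_univ_iff_exists_notMem B).mp hne
  have hall : ∀ y, ∃ b ∈ B, cf n D b = y := by
    intro y
    have : y ∈ cf n D '' B := by rw [hu]; trivial
    exact this
  have hx' : π x ∉ π '' B := by
    rintro ⟨y, hy, hxy⟩
    exact hx (π.injective hxy ▸ hy)
  refine simple_end hm hσ (e := cf n D x) ?_ ?_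
  · rcases side hB.1 hx with h1 | h1
    · left
      obtain ⟨b, hb, hb0⟩ := hall 0
      have := cf_mono n D (h1 b hb).le
      rw [hb0] at this
      exact Fin.le_zero_iff.mp this
    · right
      obtain ⟨b, hb, hb0⟩ := hall (Fin.last _)
      have := cf_mono n D (h1 b hb).le
      rw [hb0] at this
      exact Fin.last_le_iff.mp this
  · rcases side hB.2 hx' with h1 | h1
    · left
      obtain ⟨b, hb, hb0⟩ := hall (σ⁻¹ 0)
      have := h.le (h1 (π b) ⟨b, hb, rfl⟩).le
      rw [hb0] at this
      simpa using this
    · right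
      obtain ⟨b, hb, hb0⟩ := hall (σ⁻¹ (Fin.last _))
      have := h.le (h1 (π b) ⟨b, hb, rfl⟩).le
      rw [hb0] at this
      simpa [Fin.last_le_iff] using this

lemma const_on (hs : Function.Surjective (cf n D)) (hm : 2 ≤ D.card) (hσ : IsSimplePerm σ)
    (h : R D σ π) {B : Set (Fin n)} (hB : Blk π B) (hne : B ≠ Set.univ)
    {i j : Fin n} (hi : i ∈ B) (hj : j ∈ B) : cf n D i = cf n D j := by
  rcases (isSimplePerm_iff σ).mp hσ _ (blk_fwd hs h hB) with h1 | h1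
  · exact h1 ⟨i, hi, rfl⟩ ⟨j, hj, rfl⟩
  · exact absurd h1 (image_ne_univ hm hσ h hB hne)

open Classical in
/-- The cuts not crossed by any proper block. -/
noncomputable def Dstar (π : Perm (Fin n)) : Finset ℕ :=
  (Finset.Icc 1 (n - 1)).filter (fun k => ∀ B : Set (Fin n), Blk π B → B ≠ Set.univ →
    ∀ i ∈ B, ∀ j ∈ B, (i : ℕ) < k → k ≤ (j : ℕ) → False)

lemma eq_Dstar (hn : 1 ≤ n) (hD : D ⊆ Finset.Icc 1 (n - 1)) (hm : 2 ≤ D.card)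
    (hσ : IsSimplePerm σ) (h : R D σ π) : D = Dstar π := by
  have hs := cf_surj hn hD
  ext k
  simp only [Dstar, Finset.mem_filter]
  constructor
  · intro hk
    refine ⟨hD hk, ?_⟩
    intro B hB hne i hi j hj hik hkj
    exact (cf_lt_of hk hik hkj).ne (const_on hs hm hσ h hB hne hi hj)
  · rintro ⟨hk, hB⟩
    by_contra hkD
    rw [Finset.mem_Icc] at hk
    set i : Fin n := ⟨k - 1, by omega⟩ with hi
    set j : Fin n := ⟨k, by omega⟩ with hj
    have hij : cf n D i = cf n D j := by
      rw [cf_eq_iff]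
      intro d hd
      have : d ≠ k := fun e => hkD (e ▸ hd)
      simp [hi, hj]; omega
    have hb : Blk σ {cf n D i} := by
      refine ⟨Set.ordConnected_singleton, ?_⟩
      rw [Set.image_singleton]
      exact Set.ordConnected_singleton
    refine hB _ (blk_bwd h hb) ?_ i rfl j hij.symm (by simp [hi]; omega) (by simp [hj])
    intro hu
    have hall : ∀ y, y = cf n D i := by
      intro y
      obtain ⟨x, rfl⟩ := hs y
      have : x ∈ cf n D ⁻¹' {cf n D i} := by rw [hu]; trivial
      exact this
    have := (hall ⟨0, by omega⟩).trans (hall ⟨1, by omega⟩).symm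
    simp [Fin.ext_iff] at this

lemma not_split (hn : 1 ≤ n) (hD : D ⊆ Finset.Icc 1 (n - 1)) (hm : 2 ≤ D.card)
    (hσ : IsSimplePerm σ) (h : R D σ π) {k : ℕ} (hk : k ∈ Finset.Icc 1 (n - 1))
    (h1 : Blk π {i | k ≤ (i : ℕ)}) (h2 : Blk π {i | k ≤ (i : ℕ)}ᶜ) : False := by
  have hs := cf_surj hn hD
  rw [Finset.mem_Icc] at hk
  have c1 : ∀ i : Fin n, k ≤ (i : ℕ) → cf n D i = cf n D ⟨k, by omega⟩ := by
    intro i hi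
    refine const_on hs hm hσ h h1 ?_ hi (by simp)
    intro hu
    have : (⟨0, by omega⟩ : Fin n) ∈ {i : Fin n | k ≤ (i : ℕ)} := by rw [hu]; trivial
    simp at this
    omega
  have c2 : ∀ i : Fin n, ¬ k ≤ (i : ℕ) → cf n D i = cf n D ⟨0, by omega⟩ := by
    intro i hi
    refine const_on hs hm hσ h h2 ?_ hi (by simp; omega)
    intro hu
    have : (⟨k, by omega⟩ : Fin n) ∈ {i : Fin n | k ≤ (i : ℕ)}ᶜ := by rw [hu]; trivial
    simp at this
  have c3 : ∀ y, y = cf n D ⟨k, by omega⟩ ∨ y = cf n D ⟨0, by omega⟩ := by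
    intro y
    obtain ⟨x, rfl⟩ := hs y
    by_cases hx : k ≤ (x : ℕ)
    · exact Or.inl (c1 x hx)
    · exact Or.inr (c2 x hx)
  have d0 := c3 ⟨0, by omega⟩
  have d1 := c3 ⟨1, by omega⟩
  have d2 := c3 ⟨2, by omega⟩
  simp only [Fin.ext_iff] at d0 d1 d2
  omega

lemma blk_of_G {k : ℕ} (hk : k ∈ G π) : Blk π {i | k ≤ (i : ℕ)} ∧ Blk π {i | k ≤ (i : ℕ)}ᶜ := by
  unfold G at hk
  rw [Finset.mem_filter] at hk
  have e : π '' {i : Fin n | k ≤ (i : ℕ)} = {i : Fin n | k ≤ (i : ℕ)} := by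
    ext x
    simp only [Equiv.image_eq_preimage_symm, Set.mem_preimage, Set.mem_ofPred_eq]
    rw [hk.2]
    simp
  have o1 : ({i : Fin n | k ≤ (i : ℕ)}).OrdConnected := by
    constructor
    intro a ha b hb c hc
    have := hc.1
    simp only [Set.mem_ofPred_eq, Fin.le_def] at *
    omega
  have o2 : ({i : Fin n | k ≤ (i : ℕ)}ᶜ).OrdConnected := by
    constructor
    intro a ha b hb c hc
    have := hc.2
    simp only [Set.mem_compl_iff, Set.mem_ofPred_eq, Fin.le_def] at *
    omega
  refine ⟨⟨o1, by rwa [e]⟩, ⟨o2, ?_⟩⟩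
  rw [Set.image_compl_eq π.bijective, e]
  exact o2

lemma ordConnected_rev {s : Set (Fin n)} (h : s.OrdConnected) :
    (Fin.revPerm '' s).OrdConnected := by
  rw [Equiv.image_eq_preimage_symm]
  constructor
  intro a ha b hb c hc
  simp only [Set.mem_preimage, Fin.revPerm_symm, Fin.revPerm_apply] at *
  exact h.out hb ha ⟨Fin.rev_le_rev.mpr hc.2, Fin.rev_le_rev.mpr hc.1⟩

lemma blk_rev {B : Set (Fin n)} (h : Blk π B) : Blk (Fin.revPerm * π) B := by
  refine ⟨h.1, ?_⟩
  rw [Perm.coe_mul, Set.image_comp]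
  exact ordConnected_rev h.2

lemma rev_rev : Fin.revPerm * (Fin.revPerm * π) = π := by
  ext x
  simp

lemma blk_rev_iff {B : Set (Fin n)} : Blk (Fin.revPerm * π) B ↔ Blk π B :=
  ⟨fun h => by simpa only [rev_rev] using blk_rev h, blk_rev⟩

lemma G_empty (hn : 1 ≤ n) (hD : D ⊆ Finset.Icc 1 (n - 1)) (hm : 2 ≤ D.card)
    (hσ : IsSimplePerm σ) (h : R D σ π) : G π = ∅ ∧ G (Fin.revPerm * π) = ∅ := by
  constructor
  · rw [Finset.eq_empty_iff_forall_notMem]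
    intro k hk
    have := blk_of_G hk
    exact not_split hn hD hm hσ h (Finset.mem_filter.mp hk).1 this.1 this.2
  · rw [Finset.eq_empty_iff_forall_notMem]
    intro k hk
    have := blk_of_G hk
    rw [blk_rev_iff, blk_rev_iff] at this
    exact not_split hn hD hm hσ h (Finset.mem_filter.mp hk).1 this.1 this.2

lemma G_excl {k l : ℕ} (hk : k ∈ G π) (hl : l ∈ G (Fin.revPerm * π)) : False := by
  unfold G at hk hl
  rw [Finset.mem_filter, Finset.mem_Icc] at hk hl
  obtain ⟨hk1, hk2⟩ := hk
  obtain ⟨hl1, hl2⟩ := hl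
  have a1 := hk2 ⟨0, by omega⟩
  have a2 := hk2 ⟨n - 1, by omega⟩
  have b1 := hl2 ⟨0, by omega⟩
  have b2 := hl2 ⟨n - 1, by omega⟩
  simp [Fin.val_rev] at a1 a2 b1 b2
  omega

lemma R_unique (hs : Function.Surjective (cf n D)) {σ' : Perm (Fin (D.card + 1))}
    (h : R D σ π) (h' : R D σ' π) : σ' = σ := by
  have : Monotone ⇑(σ' * σ⁻¹) := by
    intro a b hab
    rcases hab.eq_or_lt with rfl | hlt
    · exact le_rfl
    obtain ⟨x, hx⟩ := hs (σ⁻¹ a)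
    obtain ⟨y, hy⟩ := hs (σ⁻¹ b)
    simp only [Perm.coe_mul, Function.comp_apply, ← hx, ← hy]
    apply h'.le
    by_contra hc
    have := h.le (not_le.mp hc).le
    rw [hx, hy] at this
    simp at this
    exact absurd hlt (not_lt.mpr this)
  rw [Equiv.Perm.monotone_iff] at this
  exact mul_inv_eq_one.mp this

end

end SimpleCong

namespace SimpleCong

open Equiv

lemma ordConnected_union {α : Type*} [LinearOrder α] {s t : Set α} (hs : s.OrdConnected)
    (ht : t.OrdConnected) {z : α} (h1 : z ∈ s) (h2 : z ∈ t) : (s ∪ t).OrdConnected := by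
  constructor
  intro a ha b hb c hc
  rcases le_total c z with h | h
  · rcases ha with ha | ha
    · exact Or.inl (hs.out ha h1 ⟨hc.1, h⟩)
    · exact Or.inr (ht.out ha h2 ⟨hc.1, h⟩)
  · rcases hb with hb | hb
    · exact Or.inl (hs.out h1 hb ⟨h, hc.2⟩)
    · exact Or.inr (ht.out h2 hb ⟨h, hc.2⟩)

section

variable {n : ℕ} {π : Perm (Fin n)}

lemma blk_union {A B : Set (Fin n)} (hA : Blk π A) (hB : Blk π B) {z : Fin n} (h1 : z ∈ A)
    (h2 : z ∈ B) : Blk π (A ∪ B) := by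
  refine ⟨ordConnected_union hA.1 hB.1 h1 h2, ?_⟩
  rw [Set.image_union]
  exact ordConnected_union hA.2 hB.2 ⟨z, h1, rfl⟩ ⟨z, h2, rfl⟩

lemma G_of_upper {B : Set (Fin n)} (h1 : IsUpperSet B) (h2 : IsUpperSet (π '' B))
    (hne : B.Nonempty) (hu : B ≠ Set.univ) : (G π).Nonempty := by
  classical
  have hc : (π '' B).ncard = B.ncard := Set.ncard_image_of_injective B π.injective
  have e : π '' B = B := by
    rcases h1.total h2 with h | h
    · exact (Set.eq_of_subset_of_ncard_le h hc.le).symm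
    · exact Set.eq_of_subset_of_ncard_le h hc.ge
  have hmem : ∀ i, i ∈ B ↔ π i ∈ B := by
    intro i
    constructor
    · intro hi
      rw [← e]
      exact ⟨i, hi, rfl⟩
    · intro hi
      rw [← e] at hi
      obtain ⟨j, hj, hji⟩ := hi
      exact π.injective hji ▸ hj
  have hne' : B.toFinset.Nonempty := by simpa using hne
  set k := B.toFinset.min' hne' with hk
  have hkB : k ∈ B := by simpa using B.toFinset.min'_mem hne'
  have hki : ∀ i : Fin n, (k : ℕ) ≤ (i : ℕ) ↔ i ∈ B := by
    intro i
    constructor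
    · intro h
      exact h1 h hkB
    · intro h
      exact B.toFinset.min'_le i (by simpa using h)
  refine ⟨(k : ℕ), ?_⟩
  unfold G
  rw [Finset.mem_filter, Finset.mem_Icc]
  refine ⟨⟨?_, by omega⟩, ?_⟩
  · by_contra h0
    apply hu
    ext i
    simp only [Set.mem_univ, iff_true]
    exact (hki i).mp (by omega)
  · intro i
    rw [hki, hki]
    exact hmem i

lemma upper_of_last {m : ℕ} {S : Set (Fin (m + 1))} (hS : S.OrdConnected)
    (h : Fin.last m ∈ S) : IsUpperSet S := by
  intro a b hab ha
  exact hS.out ha h ⟨hab, Fin.le_last b⟩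

lemma univ_of_ends {m : ℕ} {S : Set (Fin (m + 1))} (hS : S.OrdConnected)
    (h : Fin.last m ∈ S) (h0 : 0 ∈ S) : S = Set.univ := by
  ext a
  simp only [Set.mem_univ, iff_true]
  exact hS.out h0 h ⟨Fin.zero_le a, Fin.le_last a⟩

lemma image_ne_univ' {B : Set (Fin n)} (h : B ≠ Set.univ) : π '' B ≠ Set.univ := by
  intro e
  apply h
  ext x
  simp only [Set.mem_univ, iff_true]
  have : π x ∈ π '' B := by rw [e]; trivial
  obtain ⟨y, hy, hyx⟩ := this
  exact π.injective hyx ▸ hy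

lemma union_ne_univ_aux {m : ℕ} {π : Perm (Fin (m + 1))} (hG : G π = ∅)
    (hG' : G (Fin.revPerm * π) = ∅) {A B : Set (Fin (m + 1))} (hA : Blk π A) (hB : Blk π B)
    (hAu : A ≠ Set.univ) (hBu : B ≠ Set.univ) (h : A ∪ B = Set.univ) (h0 : 0 ∈ A) : False := by
  have hcov : ∀ x, x ∈ A ∨ x ∈ B := by
    intro x
    have : x ∈ A ∪ B := by rw [h]; trivial
    exact this
  have hcov' : ∀ x, x ∈ π '' A ∨ x ∈ π '' B := by
    intro x
    rcases hcov (π⁻¹ x) with h1 | h1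
    · exact Or.inl ⟨_, h1, by simp⟩
    · exact Or.inr ⟨_, h1, by simp⟩
  have l1 : Fin.last m ∉ A := fun hl => hAu (univ_of_ends hA.1 hl h0)
  have l2 : Fin.last m ∈ B := (hcov _).resolve_left l1
  have u1 : IsUpperSet B := upper_of_last hB.1 l2
  by_cases hl : Fin.last m ∈ π '' B
  · have := G_of_upper u1 (upper_of_last hB.2 hl) ⟨_, l2⟩ hBu
    rw [hG] at this
    simp at this
  · have hlA : Fin.last m ∈ π '' A := (hcov' _).resolve_right hl
    have h0B : 0 ∈ π '' B := by
      refine (hcov' 0).resolve_left fun h0A => ?_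
      exact image_ne_univ' hAu (univ_of_ends hA.2 hlA h0A)
    have hr := (blk_rev hB).2
    have hlr : Fin.last m ∈ (Fin.revPerm * π : Perm (Fin (m + 1))) '' B := by
      obtain ⟨b, hb, hb0⟩ := h0B
      exact ⟨b, hb, by simp [hb0]⟩
    have := G_of_upper u1 (upper_of_last hr hlr) ⟨_, l2⟩ hBu
    rw [hG'] at this
    simp at this

lemma union_ne_univ (hn : 1 ≤ n) (hG : G π = ∅)
    (hG' : G (Fin.revPerm * π) = ∅) {A B : Set (Fin n)} (hA : Blk π A) (hB : Blk π B)
    (hAu : A ≠ Set.univ) (hBu : B ≠ Set.univ) : A ∪ B ≠ Set.univ := by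
  intro h
  obtain ⟨m, rfl⟩ : ∃ m, n = m + 1 := ⟨n - 1, by omega⟩
  have : (0 : Fin (m + 1)) ∈ A ∪ B := by rw [h]; trivial
  rcases this with h0 | h0
  · exact union_ne_univ_aux hG hG' hA hB hAu hBu h h0
  · exact union_ne_univ_aux hG hG' hB hA hBu hAu (by rwa [Set.union_comm]) h0

lemma cover (hn : 2 ≤ n) (hG : G π = ∅) (hG' : G (Fin.revPerm * π) = ∅) (i : Fin n) (t : ℕ) :
    ∀ (h : (i : ℕ) + t < n), (∀ k ∈ Dstar π, ¬ ((i : ℕ) < k ∧ k ≤ i + t)) →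
      ∃ B : Set (Fin n), Blk π B ∧ B ≠ Set.univ ∧ i ∈ B ∧ (⟨i + t, h⟩ : Fin n) ∈ B := by
  induction t with
  | zero =>
    intro h _
    refine ⟨{i}, ⟨Set.ordConnected_singleton, ?_⟩, ?_, rfl, rfl⟩
    · rw [Set.image_singleton]
      exact Set.ordConnected_singleton
    · intro hu
      have h0 : (⟨0, by omega⟩ : Fin n) ∈ ({i} : Set (Fin n)) := by rw [hu]; trivial
      have h1 : (⟨1, by omega⟩ : Fin n) ∈ ({i} : Set (Fin n)) := by rw [hu]; trivial
      have := Eq.trans (Set.mem_singleton_iff.mp h0) (Set.mem_singleton_iff.mp h1).symm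
      simp at this
  | succ t ih =>
    intro h hk
    obtain ⟨A, hA, hAu, hiA, hjA⟩ := ih (by omega) (fun k hkD hc => hk k hkD ⟨hc.1, by omega⟩)
    have hnot : (i : ℕ) + (t + 1) ∉ Dstar π := fun hc => hk _ hc ⟨by omega, le_rfl⟩
    simp only [Dstar, Finset.mem_filter, Finset.mem_Icc, not_and] at hnot
    have hnot := hnot ⟨by omega, by omega⟩
    push Not at hnot
    obtain ⟨B, hB, hBu, a, ha, b, hb, hak, hkb, -⟩ := hnot
    have m1 : (⟨i + t, by omega⟩ : Fin n) ∈ B :=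
      hB.1.out ha hb ⟨by rw [Fin.le_def]; simp; omega, by rw [Fin.le_def]; simp; omega⟩
    have m2 : (⟨i + (t + 1), h⟩ : Fin n) ∈ B :=
      hB.1.out ha hb ⟨by rw [Fin.le_def]; simp; omega, by rw [Fin.le_def]; simp; omega⟩
    exact ⟨A ∪ B, blk_union hA hB hjA m1, union_ne_univ (by omega) hG hG' hA hB hAu hBu,
      Or.inl hiA, Or.inr m2⟩

lemma cf_Dstar_of_blk {B : Set (Fin n)} (hB : Blk π B) (hu : B ≠ Set.univ) {i j : Fin n}
    (hi : i ∈ B) (hj : j ∈ B) : cf n (Dstar π) i = cf n (Dstar π) j := by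
  rw [cf_eq_iff]
  intro d hd
  simp only [Dstar, Finset.mem_filter] at hd
  constructor
  · intro h
    by_contra hc
    exact hd.2 B hB hu j hj i hi (not_le.mp hc) h
  · intro h
    by_contra hc
    exact hd.2 B hB hu i hi j hj (not_le.mp hc) h

lemma blk_of_cf (hn : 2 ≤ n) (hG : G π = ∅) (hG' : G (Fin.revPerm * π) = ∅) {i j : Fin n}
    (h : cf n (Dstar π) i = cf n (Dstar π) j) :
    ∃ B : Set (Fin n), Blk π B ∧ B ≠ Set.univ ∧ i ∈ B ∧ j ∈ B := by
  have aux : ∀ i j : Fin n, i ≤ j → cf n (Dstar π) i = cf n (Dstar π) j →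
      ∃ B : Set (Fin n), Blk π B ∧ B ≠ Set.univ ∧ i ∈ B ∧ j ∈ B := by
    intro i j hij h
    rw [Fin.le_def] at hij
    rw [cf_eq_iff] at h
    obtain ⟨B, hB, hu, hi, hj⟩ := cover hn hG hG' i (j - i) (by omega) (by
      intro k hk hc
      have := h k hk
      omega)
    refine ⟨B, hB, hu, hi, ?_⟩
    convert hj
    omega
  rcases le_total i j with hij | hij
  · exact aux i j hij h
  · obtain ⟨B, hB, hu, hi, hj⟩ := aux j i hij h.symm
    exact ⟨B, hB, hu, hj, hi⟩

lemma Dstar_sub : Dstar π ⊆ Finset.Icc 1 (n - 1) := by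
  classical
  intro k hk
  simp only [Dstar, Finset.mem_filter] at hk
  exact hk.1

lemma exists_R (hn : 2 ≤ n) (hG : G π = ∅) (hG' : G (Fin.revPerm * π) = ∅) :
    ∃ σ : Perm (Fin ((Dstar π).card + 1)), R (Dstar π) σ π := by
  have hs := cf_surj (by omega : 1 ≤ n) (Dstar_sub (π := π))
  set f := cf n (Dstar π) with hf
  set r := Function.surjInv hs with hr
  have hfr : ∀ y, f (r y) = y := Function.surjInv_eq hs
  have step : ∀ i i' j, f i = f i' → f i ≠ f j →
      ((π i < π j ↔ π i' < π j) ∧ (π j < π i ↔ π j < π i')) := by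
    intro i i' j h1 h2
    obtain ⟨B, hB, hu, hi, hi'⟩ := blk_of_cf hn hG hG' h1
    have hj : π j ∉ π '' B := by
      rintro ⟨b, hb, hbj⟩
      have hbj := π.injective hbj
      subst hbj
      exact h2 (cf_Dstar_of_blk hB hu hi hb)
    rcases side hB.2 hj with h3 | h3
    · have a1 := h3 _ ⟨i, hi, rfl⟩
      have a2 := h3 _ ⟨i', hi', rfl⟩
      constructor <;> constructor <;> intro _ <;> order
    · have a1 := h3 _ ⟨i, hi, rfl⟩
      have a2 := h3 _ ⟨i', hi', rfl⟩
      constructor <;> constructor <;> intro _ <;> order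
  set key : Fin ((Dstar π).card + 1) → Fin n := π ∘ r with hkey
  have hinj : Function.Injective key :=
    π.injective.comp (Function.injective_surjInv hs)
  set τ := Tuple.sort key with hτ
  have hmono : StrictMono (key ∘ τ) :=
    (Tuple.monotone_sort key).strictMono_of_injective (hinj.comp τ.injective)
  refine ⟨τ⁻¹, ?_⟩
  rw [R_iff]
  intro i j hij
  rw [← hmono.le_iff_le]
  have hττ : ∀ y, τ (τ⁻¹ y) = y := fun y => τ.apply_symm_apply y
  rw [Function.comp_apply, Function.comp_apply, hττ, hττ, ← hf]
  by_cases he : f i = f j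
  · rw [he]
  · have hlt : π i < π j := lt_of_le_of_ne hij (fun e => he (by rw [π.injective e]))
    have h1 := (step i (r (f i)) j (hfr _).symm he).1.mp hlt
    have h2 := (step j (r (f j)) (r (f i)) (hfr _).symm (by rw [hfr]; exact Ne.symm he)).2.mp h1
    exact h2.le

lemma perm_two {m : ℕ} (hm : m = 1) (σ : Perm (Fin (m + 1))) : σ = 1 ∨ σ = Fin.revPerm := by
  subst hm
  revert σ
  decide

lemma exists_simple (hn : 2 ≤ n) (hG : G π = ∅) (hG' : G (Fin.revPerm * π) = ∅) :
    ∃ σ : Perm (Fin ((Dstar π).card + 1)), 2 ≤ (Dstar π).card ∧ IsSimplePerm σ ∧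
      R (Dstar π) σ π := by
  have hs := cf_surj (by omega : 1 ≤ n) (Dstar_sub (π := π))
  obtain ⟨σ, hR⟩ := exists_R hn hG hG'
  refine ⟨σ, ?_, ?_, hR⟩
  · by_contra hc
    have : (Dstar π).card = 0 ∨ (Dstar π).card = 1 := by omega
    rcases this with h0 | h1
    · obtain ⟨B, hB, hu, h1, h2⟩ := blk_of_cf hn hG hG'
        (i := ⟨0, by omega⟩) (j := ⟨n - 1, by omega⟩) (by
          rw [Finset.card_eq_zero] at h0
          rw [cf_eq_iff, h0]
          simp)
      apply hu
      ext x
      simp only [Set.mem_univ, iff_true]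
      exact hB.1.out h1 h2 ⟨by rw [Fin.le_def]; simp, by rw [Fin.le_def]; simp; omega⟩
    · have hcard : Dstar π ≠ ∅ := by
        intro e
        rw [e] at h1
        simp at h1
      rcases perm_two h1 σ with rfl | rfl
      · rw [R_one_iff Dstar_sub, hG] at hR
        exact hcard (Finset.subset_empty.mp hR)
      · rw [R_rev_iff Dstar_sub, hG'] at hR
        exact hcard (Finset.subset_empty.mp hR)
  · rw [isSimplePerm_iff]
    intro B hB
    by_cases hu : B = Set.univ
    · exact Or.inr hu
    · left
      intro x hx y hy
      obtain ⟨a, rfl⟩ := hs x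
      obtain ⟨b, rfl⟩ := hs y
      refine cf_Dstar_of_blk (blk_bwd hR hB) ?_ hx hy
      intro e
      apply hu
      ext z
      simp only [Set.mem_univ, iff_true]
      obtain ⟨c, rfl⟩ := hs z
      have : c ∈ cf n (Dstar π) ⁻¹' B := by rw [e]; trivial
      exact this

end

end SimpleCong

namespace SimpleCong

open Equiv

open Classical in
/-- Weight of a quotient permutation. -/
noncomputable def wt (m : ℕ) (σ : Perm (Fin (m + 1))) : ℤ :=
  (if 2 ≤ m ∧ IsSimplePerm σ then 1 else 0) + (if σ = 1 then (-1) ^ (m + 1) else 0) +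
    (if σ = Fin.revPerm then (-1) ^ (m + 1) else 0)

/-- Total weight. -/
noncomputable def A (m : ℕ) : ℤ := ∑ σ : Perm (Fin (m + 1)), wt m σ

/-- Nonempty cut sets. -/
def S (n : ℕ) : Finset (Finset ℕ) := (Finset.Icc 1 (n - 1)).powerset.erase ∅

lemma mem_S {n : ℕ} {D : Finset ℕ} : D ∈ S n ↔ D ≠ ∅ ∧ D ⊆ Finset.Icc 1 (n - 1) := by
  simp [S]

lemma A_one : A 1 = 2 := by
  unfold A wt
  simp only [show ¬ (2 ≤ 1) by norm_num, false_and, if_false, zero_add, Finset.sum_add_distrib,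
    Finset.sum_ite_eq', Finset.mem_univ, if_true]
  norm_num

lemma A_eq (m : ℕ) (hm : 2 ≤ m) : A m = simpleCount (m + 1) + 2 * (-1) ^ (m + 1) := by
  classical
  unfold A wt
  simp only [hm, true_and, Finset.sum_add_distrib,
    Finset.sum_ite_eq', Finset.mem_univ, if_true]
  rw [Finset.sum_boole, simpleCount, Nat.card_eq_fintype_card, Fintype.card_subtype]
  ring

lemma sum_G {n : ℕ} (π : Perm (Fin n)) :
    ∑ D ∈ S n, (if D ⊆ G π then (-1 : ℤ) ^ (D.card + 1) else 0) =
      if (G π).Nonempty then 1 else 0 := by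
  rw [← Finset.sum_filter, ← alt_sum]
  apply Finset.sum_congr _ fun _ _ => rfl
  ext D
  simp only [Finset.mem_filter, mem_S, Finset.mem_erase, Finset.mem_powerset]
  constructor
  · rintro ⟨⟨h1, h2⟩, h3⟩
    exact ⟨h1, h3⟩
  · rintro ⟨h1, h3⟩
    exact ⟨⟨h1, h3.trans (Finset.filter_subset _ _)⟩, h3⟩

open Classical in
lemma sum_simple {n : ℕ} (hn : 2 ≤ n) (π : Perm (Fin n)) :
    ∑ D ∈ S n, ∑ σ : Perm (Fin (D.card + 1)),
      (if R D σ π then (if 2 ≤ D.card ∧ IsSimplePerm σ then (1 : ℤ) else 0) else 0) =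
      if G π = ∅ ∧ G (Fin.revPerm * π) = ∅ then 1 else 0 := by
  split_ifs with hG
  · obtain ⟨σ₀, h2, hσ, hR⟩ := exists_simple hn hG.1 hG.2
    rw [Finset.sum_eq_single (Dstar π)]
    · rw [Finset.sum_eq_single σ₀]
      · rw [if_pos hR, if_pos ⟨h2, hσ⟩]
      · intro σ _ hne
        rw [if_neg]
        intro hR'
        exact hne (R_unique (cf_surj (by omega) Dstar_sub) hR hR')
      · simp
    · intro D hD hne
      apply Finset.sum_eq_zero
      intro σ _
      split_ifs with h1 h2
      · exact absurd (eq_Dstar (by omega) (mem_S.mp hD).2 h2.1 h2.2 h1) hne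
      · rfl
      · rfl
    · intro h
      exfalso
      apply h
      rw [mem_S]
      refine ⟨?_, Dstar_sub⟩
      intro e
      rw [e] at h2
      simp at h2
  · apply Finset.sum_eq_zero
    intro D hD
    apply Finset.sum_eq_zero
    intro σ _
    split_ifs with h1 h2
    · exact absurd (G_empty (by omega) (mem_S.mp hD).2 h2.1 h2.2 h1) hG
    · rfl
    · rfl

open Classical in
lemma per_perm {n : ℕ} (hn : 2 ≤ n) (π : Perm (Fin n)) :
    ∑ D ∈ S n, ∑ σ : Perm (Fin (D.card + 1)), (if R D σ π then wt D.card σ else 0) = 1 := by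
  have e : ∀ D ∈ S n, ∑ σ : Perm (Fin (D.card + 1)), (if R D σ π then wt D.card σ else 0) =
      ∑ σ : Perm (Fin (D.card + 1)),
        (if R D σ π then (if 2 ≤ D.card ∧ IsSimplePerm σ then (1 : ℤ) else 0) else 0) +
      (if D ⊆ G π then (-1 : ℤ) ^ (D.card + 1) else 0) +
      (if D ⊆ G (Fin.revPerm * π) then (-1 : ℤ) ^ (D.card + 1) else 0) := by
    intro D hD
    have hD' := (mem_S.mp hD).2
    have e1 : (if D ⊆ G π then (-1 : ℤ) ^ (D.card + 1) else 0) =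
        ∑ σ : Perm (Fin (D.card + 1)),
          if R D σ π then (if σ = 1 then (-1 : ℤ) ^ (D.card + 1) else 0) else 0 := by
      rw [Finset.sum_eq_single (1 : Perm (Fin (D.card + 1)))]
      · simp only [R_one_iff hD', if_true]
      · intro σ _ hne
        simp [hne]
      · simp
    have e2 : (if D ⊆ G (Fin.revPerm * π) then (-1 : ℤ) ^ (D.card + 1) else 0) =
        ∑ σ : Perm (Fin (D.card + 1)),
          if R D σ π then (if σ = Fin.revPerm then (-1 : ℤ) ^ (D.card + 1) else 0) else 0 := by
      rw [Finset.sum_eq_single (Fin.revPerm : Perm (Fin (D.card + 1)))]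
      · simp only [R_rev_iff hD', if_true]
      · intro σ _ hne
        simp [hne]
      · simp
    rw [e1, e2, ← Finset.sum_add_distrib, ← Finset.sum_add_distrib]
    apply Finset.sum_congr rfl
    intro σ _
    unfold wt
    by_cases hR : R D σ π
    · simp only [hR, if_true]
    · simp only [hR, if_false, add_zero]
  rw [Finset.sum_congr rfl e, Finset.sum_add_distrib, Finset.sum_add_distrib, sum_simple hn,
    sum_G, sum_G]
  rcases (G π).eq_empty_or_nonempty with h1 | h1 <;>
  rcases (G (Fin.revPerm * π)).eq_empty_or_nonempty with h2 | h2
  · simp [h1, h2]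
  · simp [h1, h2, h2.ne_empty]
  · simp [h1, h2, h1.ne_empty]
  · exact (G_excl h1.choose_spec h2.choose_spec).elim

lemma main_identity {n : ℕ} (hn : 2 ≤ n) :
    (n.factorial : ℤ) = ∑ D ∈ S n, A D.card * P n D := by
  classical
  have h1 : (n.factorial : ℤ) = ∑ π : Perm (Fin n), (1 : ℤ) := by
    simp [Fintype.card_perm]
  rw [h1, ← Finset.sum_congr rfl (fun π _ => per_perm hn π), Finset.sum_comm]
  apply Finset.sum_congr rfl
  intro D _
  rw [Finset.sum_comm, A, Finset.sum_mul]
  apply Finset.sum_congr rfl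
  intro σ _
  rw [← Finset.sum_filter, Finset.sum_const, ← card_R n D σ, nsmul_eq_mul, mul_comm]

lemma two_pow_dvd_factorial (c : ℕ) : 2 ^ (c / 2) ∣ c.factorial := by
  induction c using Nat.twoStepInduction with
  | zero => simp
  | one => simp
  | more c ih _ =>
    have e : (c + 2) / 2 = c / 2 + 1 := by omega
    rw [e, pow_succ, Nat.factorial_succ, Nat.factorial_succ, ← mul_assoc, mul_comm]
    apply mul_dvd_mul _ ih
    rcases Nat.even_or_odd c with h | h
    · exact Dvd.dvd.mul_right (by obtain ⟨r, rfl⟩ := h; omega) _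
    · exact Dvd.dvd.mul_left (by obtain ⟨r, rfl⟩ := h; omega) _

lemma P_dvd (n : ℕ) (D : Finset ℕ) : ∃ e : ℕ, n ≤ 2 * e + (D.card + 1) ∧ 2 ^ e ∣ P n D := by
  refine ⟨∑ j : Fin (D.card + 1), Fintype.card {a : Fin n // cf n D a = j} / 2, ?_, ?_⟩
  · have h1 : n = ∑ j : Fin (D.card + 1), Fintype.card {a : Fin n // cf n D a = j} := by
      have := Finset.card_eq_sum_card_fiberwise (f := cf n D) (s := Finset.univ)
        (t := Finset.univ) (fun _ _ => by simp)
      simp only [Finset.card_univ, Fintype.card_fin] at this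
      refine this.trans ?_
      apply Finset.sum_congr rfl
      intro j _
      rw [Fintype.card_subtype]
    have h2 : ∑ j : Fin (D.card + 1), Fintype.card {a : Fin n // cf n D a = j} ≤
        ∑ j : Fin (D.card + 1), (2 * (Fintype.card {a : Fin n // cf n D a = j} / 2) + 1) :=
      Finset.sum_le_sum fun j _ => by omega
    rw [Finset.sum_add_distrib, ← Finset.mul_sum] at h2
    simp only [Finset.sum_const, Finset.card_univ, Fintype.card_fin, smul_eq_mul, mul_one] at h2
    exact h1.le.trans h2
  · rw [← Finset.prod_pow_eq_pow_sum]
    exact Finset.prod_dvd_prod_of_dvd _ _ fun j _ => two_pow_dvd_factorial _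

lemma P_full (n : ℕ) : P n (Finset.Icc 1 (n - 1)) = 1 := by
  unfold P
  apply Finset.prod_eq_one
  intro j _
  have : Fintype.card {a : Fin n // cf n (Finset.Icc 1 (n - 1)) a = j} ≤ 1 := by
    rw [Fintype.card_le_one_iff]
    rintro ⟨a, ha⟩ ⟨b, hb⟩
    have h := cf_eq_iff.mp (ha.trans hb.symm)
    apply Subtype.ext
    apply Fin.ext
    have h1 := h a
    have h2 := h b
    simp only [Finset.mem_Icc] at h1 h2
    show (a : ℕ) = b
    omega
  rw [Nat.factorial_eq_one]
  exact this

lemma A_dvd (m : ℕ) : 1 ≤ m → (2 : ℤ) ^ ((m + 1) / 2) ∣ A m := by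
  induction m using Nat.strong_induction_on with
  | _ m ih =>
    intro hm
    have h := main_identity (n := m + 1) (by omega)
    have hfull : Finset.Icc 1 m ∈ S (m + 1) := by
      rw [mem_S]
      refine ⟨?_, by simp⟩
      rw [← Finset.nonempty_iff_ne_empty]
      exact ⟨1, by simp [hm]⟩
    rw [← Finset.add_sum_erase _ _ hfull] at h
    have hP : P (m + 1) (Finset.Icc 1 m) = 1 := P_full (m + 1)
    rw [hP, Nat.card_Icc] at h
    simp only [Nat.add_sub_cancel, Nat.cast_one, mul_one] at h
    have hA := eq_sub_of_add_eq h.symm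
    rw [hA]
    apply dvd_sub
    · have := two_pow_dvd_factorial (m + 1)
      exact_mod_cast this
    · apply Finset.dvd_sum
      intro D hD
      rw [Finset.mem_erase, mem_S] at hD
      obtain ⟨hne, hne0, hsub⟩ := hD
      have hsub : D ⊆ Finset.Icc 1 m := hsub
      have hlt : D.card < m := by
        have := Finset.card_lt_card (hsub.ssubset_of_ne hne)
        simpa using this
      have hpos : 1 ≤ D.card := Finset.card_pos.mpr (Finset.nonempty_iff_ne_empty.mpr hne0)
      obtain ⟨e, he, hdvd⟩ := P_dvd (m + 1) D
      have hdvd' : (2 : ℤ) ^ e ∣ (P (m + 1) D : ℤ) := by exact_mod_cast hdvd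
      have := mul_dvd_mul (ih D.card hlt hpos) hdvd'
      rw [← pow_add] at this
      exact (pow_dvd_pow 2 (by omega)).trans this

end SimpleCong

/-- For `n ≥ 3`: `sₙ ≡ 2 (mod 2^{(n-1)/2})` for odd `n`, and
`sₙ ≡ -2 (mod 2^{n/2})` for even `n`. -/
theorem simpleCount_congruence_mod_two_powers (n : ℕ) (hn : 3 ≤ n) :
    (Odd n → (simpleCount n : ℤ) ≡ 2 [ZMOD (2 : ℤ) ^ ((n - 1) / 2)]) ∧
    (Even n → (simpleCount n : ℤ) ≡ -2 [ZMOD (2 : ℤ) ^ (n / 2)]) := by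
  obtain ⟨m, rfl⟩ : ∃ m, n = m + 1 := ⟨n - 1, by omega⟩
  have h := SimpleCong.A_dvd m (by omega)
  rw [SimpleCong.A_eq m (by omega)] at h
  constructor
  · intro ho
    rw [ho.neg_one_pow] at h
    have e : (m + 1) / 2 = (m + 1 - 1) / 2 := by
      obtain ⟨r, hr⟩ := ho
      omega
    rw [e] at h
    apply Int.ModEq.symm
    rw [Int.modEq_iff_dvd]
    convert h using 1
    ring
  · intro he
    rw [he.neg_one_pow] at h
    apply Int.ModEq.symm
    rw [Int.modEq_iff_dvd]
    convert h using 1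
    ring
end

section
/- For every integer n > 2, s_n ≡ −C_{n−1} + (−1)^n (mod 3), where C_{n−1} is the (n−1)-st Catalan number. -/
open Finset PowerSeries in
theorem count_infl {n m : ℕ} (f : Fin n → Fin m) (σ : Equiv.Perm (Fin m))
    [Fintype {π : Equiv.Perm (Fin n) // Monotone (σ ∘ f ∘ π.symm)}] :
    Fintype.card {π : Equiv.Perm (Fin n) // Monotone (σ ∘ f ∘ π.symm)}
      = ∏ k, (Fintype.card {a // f a = k}).factorial := by
  classical
  rw [← DomMulAct.stabilizer_card f]
  symm
  let π0 : Equiv.Perm (Fin n) := (Tuple.sort (σ ∘ f)).symm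
  have h0 : Monotone ((σ ∘ f) ∘ π0.symm) := Tuple.monotone_sort (σ ∘ f)
  refine Fintype.card_congr (Equiv.subtypeEquiv (Equiv.mulLeft π0) ?_)
  intro g
  constructor
  · intro hg
    have hg' : f ∘ g.symm = f := by
      funext x
      have := congrFun hg (g.symm x)
      simpa using this.symm
    have : σ ∘ f ∘ (Equiv.mulLeft π0 g).symm = (σ ∘ f) ∘ π0.symm := by
      funext x
      have := congrFun hg' (π0.symm x)
      simp only [Function.comp_apply] at this
      simp only [Function.comp_apply]
      rw [← this]
      rfl
    rw [this]; exact h0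
  · intro h
    have h' : Monotone ((σ ∘ f) ∘ (Equiv.mulLeft π0 g).symm) := h
    have := Tuple.unique_monotone h0 h'
    funext x
    have h2 := congrFun this (π0 (g x))
    have h3 : (Equiv.mulLeft π0 g).symm (π0 (g x)) = x := by
      rw [Equiv.symm_apply_eq]; rfl
    simp only [Function.comp_apply] at h2
    rw [h3] at h2
    simpa using h2

noncomputable def fibCard {n m : ℕ} (f : Fin n → Fin m) (k : Fin m) : ℕ :=
  Fintype.card {a // f a = k}

theorem mono_ext_of_fibCard {n m : ℕ} {f g : Fin n → Fin m} (hf : Monotone f) (hg : Monotone g)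
    (h : ∀ k, fibCard f k = fibCard g k) : f = g := by
  classical
  have e : ∀ k, Nonempty ({a // f a = k} ≃ {a // g a = k}) := fun k =>
    ⟨Fintype.equivOfCardEq (h k)⟩
  let ρ : Equiv.Perm (Fin n) := Equiv.ofFiberEquiv (fun k => (e k).some)
  have hρ : ∀ a, g (ρ a) = f a := fun a => Equiv.ofFiberEquiv_map _ a
  have h1 : g ∘ ρ = f := funext hρ
  have h2 : Monotone (g ∘ ρ) := by rw [h1]; exact hf
  have h3 : Monotone (g ∘ (Equiv.refl (Fin n))) := hg
  have := Tuple.unique_monotone h2 h3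
  rw [h1] at this
  exact this

theorem exists_mono_fibCard {n m : ℕ} (c : Fin m → ℕ) (hc : ∑ k, c k = n) :
    ∃ f : Fin n → Fin m, Monotone f ∧ ∀ k, fibCard f k = c k := by
  classical
  have e : Fin n ≃ (Σ k : Fin m, Fin (c k)) := Fintype.equivOfCardEq (by simp [hc])
  let f0 : Fin n → Fin m := fun x => (e x).1
  refine ⟨f0 ∘ Tuple.sort f0, Tuple.monotone_sort f0, fun k => ?_⟩
  have : {a // (f0 ∘ Tuple.sort f0) a = k} ≃ Fin (c k) :=
    calc {a // (f0 ∘ Tuple.sort f0) a = k} ≃ {p : (Σ k : Fin m, Fin (c k)) // p.1 = k} :=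
          Equiv.subtypeEquiv ((Tuple.sort f0).trans e) (fun a => by simp [f0])
      _ ≃ Fin (c k) := Equiv.sigmaSubtype k
  unfold fibCard
  rw [Fintype.card_congr this, Fintype.card_fin]

theorem fibCard_sum {n m : ℕ} (f : Fin n → Fin m) : ∑ k, fibCard f k = n := by
  classical
  have := Fintype.card_congr (Equiv.sigmaFiberEquiv f)
  rw [Fintype.card_sigma, Fintype.card_fin] at this
  exact this

theorem fibCard_eq_zero {n m : ℕ} (f : Fin n → Fin m) (k : Fin m) :
    fibCard f k = 0 ↔ ∀ a, f a ≠ k := by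
  unfold fibCard
  rw [Fintype.card_eq_zero_iff, isEmpty_subtype]

open Classical in
noncomputable def MS (n m : ℕ) : Finset (Fin n → Fin m) :=
  Finset.univ.filter (fun f => Monotone f ∧ Function.Surjective f)

theorem mem_MS {n m : ℕ} {f : Fin n → Fin m} :
    f ∈ MS n m ↔ Monotone f ∧ Function.Surjective f := by simp [MS]

open PowerSeries in
theorem coeff_y (c : ℕ) (hc : c ≠ 0) :
    PowerSeries.coeff c ((X - X ^ 2 : (ZMod 3)⟦X⟧)) = (c.factorial : ZMod 3) := by
  rw [map_sub, PowerSeries.coeff_X, PowerSeries.coeff_X_pow]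
  rcases c with _ | _ | _ | c
  · exact absurd rfl hc
  · simp
  · simp; decide
  · have : ((c + 1 + 1 + 1).factorial : ZMod 3) = 0 := by
      rw [ZMod.natCast_eq_zero_iff]
      exact Nat.dvd_factorial (by norm_num) (by omega)
    rw [this]; simp

open PowerSeries in
theorem sum_MS (n m : ℕ) :
    ∑ f ∈ MS n m, ∏ k, ((fibCard f k).factorial : ZMod 3)
      = PowerSeries.coeff n ((X - X ^ 2 : (ZMod 3)⟦X⟧) ^ m) := by
  classical
  have h1 : (X - X ^ 2 : (ZMod 3)⟦X⟧) ^ m = ∏ _k : Fin m, (X - X ^ 2 : (ZMod 3)⟦X⟧) := by simp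
  rw [h1, PowerSeries.coeff_prod]
  have h2 : ∑ f ∈ MS n m, ∏ k, ((fibCard f k).factorial : ZMod 3)
      = ∑ f ∈ Finset.univ.filter (fun f : Fin n → Fin m => Monotone f),
        ∏ k, PowerSeries.coeff (fibCard f k) ((X - X ^ 2 : (ZMod 3)⟦X⟧)) := by
    have : ∑ f ∈ MS n m, ∏ k, ((fibCard f k).factorial : ZMod 3)
      = ∑ f ∈ MS n m, ∏ k, PowerSeries.coeff (fibCard f k) ((X - X ^ 2 : (ZMod 3)⟦X⟧)) := by
      refine Finset.sum_congr rfl fun f hf => Finset.prod_congr rfl fun k _ => ?_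
      rw [coeff_y]
      intro h
      rw [fibCard_eq_zero] at h
      obtain ⟨a, ha⟩ := (mem_MS.1 hf).2 k
      exact h a ha
    rw [this]
    refine Finset.sum_subset ?_ ?_
    · intro f hf
      simp [(mem_MS.1 hf).1]
    · intro f hf hf'
      simp only [Finset.mem_filter, Finset.mem_univ, true_and] at hf
      rw [mem_MS] at hf'
      have : ¬ Function.Surjective f := fun h => hf' ⟨hf, h⟩
      unfold Function.Surjective at this
      push Not at this
      obtain ⟨k, hk⟩ := this
      refine Finset.prod_eq_zero (Finset.mem_univ k) ?_
      rw [(fibCard_eq_zero f k).2 hk]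
      simp
  rw [h2]
  refine Finset.sum_bij (fun f _ => Finsupp.equivFunOnFinite.symm (fibCard f)) ?_ ?_ ?_ ?_
  · intro f _
    rw [Finset.mem_finsuppAntidiag]
    exact ⟨by simpa using fibCard_sum f, by simp⟩
  · intro f hf g hg h
    simp only [Finset.mem_filter, Finset.mem_univ, true_and] at hf hg
    have := Finsupp.equivFunOnFinite.symm.injective h
    exact mono_ext_of_fibCard hf hg (congrFun this)
  · intro l hl
    rw [Finset.mem_finsuppAntidiag] at hl
    obtain ⟨f, hf, hk⟩ := exists_mono_fibCard (fun k => l k) hl.1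
    refine ⟨f, by simp [hf], ?_⟩
    ext k
    simp [hk]
  · intro f hf
    simp

open PowerSeries in
theorem series_solve (b : ℕ → ZMod 3) (h0 : b 0 = 0) (h1 : b 1 = 0)
    (hb : ∀ n, 2 ≤ n → ∑ m ∈ Finset.Icc 2 n, b m * PowerSeries.coeff n ((X - X ^ 2 : (ZMod 3)⟦X⟧) ^ m)
      = (n.factorial : ZMod 3)) (n : ℕ) (hn : 2 ≤ n) : b n = - (catalan (n - 1) : ZMod 3) := by
  have : Fact (Nat.Prime 3) := ⟨Nat.prime_three⟩
  set y : (ZMod 3)⟦X⟧ := X - X ^ 2 with hy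
  have hs : HasSubst y := HasSubst.of_constantCoeff_zero' (by simp [hy])
  have hz : ∀ n m, n < m → PowerSeries.coeff n (y ^ m) = 0 := by
    intro n m h
    have : y ^ m = X ^ m * (1 - X) ^ m := by rw [← mul_pow, hy]; ring
    rw [this, coeff_X_pow_mul', if_neg (by omega)]
  have hd : ∀ n, PowerSeries.coeff n (y ^ n) = 1 := by
    intro n
    have : y ^ n = X ^ n * (1 - X) ^ n := by rw [← mul_pow, hy]; ring
    rw [this, coeff_X_pow_mul', if_pos le_rfl]; simp
  have hco : ∀ (f : (ZMod 3)⟦X⟧) n, PowerSeries.coeff n (subst y f)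
      = ∑ m ∈ Finset.range (n + 1), PowerSeries.coeff m f * PowerSeries.coeff n (y ^ m) := by
    intro f n
    rw [coeff_subst' hs]
    rw [finsum_eq_sum_of_support_subset]
    · rfl
    · intro d hd
      simp only [Function.mem_support, smul_eq_mul] at hd
      simp only [Finset.coe_range, Set.mem_Iio]
      by_contra hlt
      exact hd (by rw [hz n d (by omega), mul_zero])
  let B : (ZMod 3)⟦X⟧ := PowerSeries.mk b
  let Cs : (ZMod 3)⟦X⟧ := PowerSeries.map (Nat.castRingHom (ZMod 3)) catalanSeries
  have hCs : Cs ^ 2 * X + 1 = Cs := by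
    have := congrArg (PowerSeries.map (Nat.castRingHom (ZMod 3))) catalanSeries_sq_mul_X_add_one
    simpa [Cs] using this
  let G := X * Cs
  have hG : G - G ^ 2 = X := by
    have : G = X * (Cs ^ 2 * X + 1) := by rw [hCs]
    calc G - G ^ 2 = X * (Cs ^ 2 * X + 1) - (X * Cs) ^ 2 := by rw [← this]
      _ = X := by ring
  have hBy : subst y B = y - X := by
    ext n
    rw [hco]
    have hr : ∑ m ∈ Finset.range (n + 1), PowerSeries.coeff m B * PowerSeries.coeff n (y ^ m)
       = ∑ m ∈ Finset.Icc 2 n, b m * PowerSeries.coeff n (y ^ m) := by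
      symm
      simp only [B, coeff_mk]
      refine Finset.sum_subset ?_ ?_
      · intro m; simp only [Finset.mem_Icc, Finset.mem_range]; omega
      · intro m hm hm'
        simp only [Finset.mem_range, Finset.mem_Icc, not_and] at hm hm'
        have : m = 0 ∨ m = 1 := by omega
        rcases this with rfl | rfl
        · simp [h0]
        · simp [h1]
    rw [hr]
    rcases n with _ | _ | n
    · simp [hy]
    · simp [hy, coeff_X_pow]
    · rw [hb _ (by omega), map_sub, hy, coeff_y _ (by omega), coeff_X, if_neg (by omega), sub_zero]
  have hGy : subst y G = X := by
    set Z := subst y G with hZ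
    have h : Z - Z ^ 2 = y := by
      have := congrArg (substAlgHom (R := ZMod 3) hs) hG
      rw [map_sub, map_pow, coe_substAlgHom, subst_X hs] at this
      exact this
    have h2 : (Z - X) * (1 - Z - X) = 0 := by
      have : (Z - X) * (1 - Z - X) = (Z - Z ^ 2) - (X - X ^ 2) := by ring
      rw [this, h, ← hy, sub_self]
    rcases mul_eq_zero.1 h2 with h3 | h3
    · exact sub_eq_zero.1 h3
    · exfalso
      have h4 := congrArg (PowerSeries.coeff 0) h3
      have h5 : PowerSeries.coeff 0 Z = 0 := by
        rw [hZ, hco]; simp [G]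
      rw [map_sub, map_sub, h5] at h4
      simp at h4
  have hE : subst y (B - X + G) = 0 := by
    have : subst y (B - X + G) = substAlgHom (R := ZMod 3) hs (B - X + G) := by rw [coe_substAlgHom]
    rw [this, map_add, map_sub, coe_substAlgHom, hBy, hGy, subst_X hs]; ring
  have hE0 : ∀ n, PowerSeries.coeff n (B - X + G) = 0 := by
    intro n
    induction n using Nat.strong_induction_on with
    | _ n ih =>
      have := hco (B - X + G) n
      rw [hE, Finset.sum_range_succ, Finset.sum_eq_zero, hd] at this
      · simpa using this.symm
      · intro m hm
        rw [ih m (Finset.mem_range.1 hm), zero_mul]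
  have := hE0 n
  obtain ⟨k, rfl⟩ : ∃ k, n = k + 2 := ⟨n - 2, by omega⟩
  rw [map_add, map_sub, coeff_X, if_neg (by omega)] at this
  have hg : PowerSeries.coeff (k + 2) G = (catalan (k + 1) : ZMod 3) := by
    simp only [G, Cs]
    rw [show k + 2 = (k + 1) + 1 from rfl, coeff_succ_X_mul]
    simp
  rw [hg] at this
  simp only [B, coeff_mk, sub_zero] at this
  exact eq_neg_of_add_eq_zero_left this

noncomputable def cuts {n : ℕ} (π : Equiv.Perm (Fin n)) : Finset ℕ :=
  (Finset.Ico 1 n).filter (fun t => ∀ i : Fin n, (π i : ℕ) < t ↔ (i : ℕ) < t)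

theorem mem_cuts {n : ℕ} {π : Equiv.Perm (Fin n)} {t : ℕ} :
    t ∈ cuts π ↔ (1 ≤ t ∧ t < n) ∧ ∀ i : Fin n, (π i : ℕ) < t ↔ (i : ℕ) < t := by
  simp [cuts]

/-- two monotone rearrangements agree -/
theorem mono_comp_eq {n m : ℕ} {f : Fin n → Fin m} {π : Equiv.Perm (Fin n)}
    (hf : Monotone f) (h : Monotone (f ∘ π.symm)) (i : Fin n) : f (π i) = f i := by
  have h3 : Monotone (f ∘ (Equiv.refl (Fin n))) := hf
  have := congrFun (Tuple.unique_monotone h h3) (π i)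
  simpa using this.symm

theorem cuts_of_mono {n m : ℕ} {f : Fin n → Fin m} {π : Equiv.Perm (Fin n)}
    (hf : Monotone f) (h : Monotone (f ∘ π.symm)) (i j : Fin n) (hij : (i : ℕ) + 1 = j)
    (hlt : f i < f j) : (j : ℕ) ∈ cuts π := by
  rw [mem_cuts]
  refine ⟨⟨by omega, j.2⟩, fun a => ?_⟩
  have ha := mono_comp_eq hf h a
  constructor
  · intro h1
    by_contra h2
    have h3 : f j ≤ f a := hf (Fin.le_def.2 (by omega))
    have h4 : f (π a) ≤ f i := hf (Fin.le_def.2 (by omega))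
    rw [ha] at h4
    exact absurd (lt_of_lt_of_le hlt h3) (not_lt.2 h4)
  · intro h1
    by_contra h2
    have h3 : f j ≤ f (π a) := hf (Fin.le_def.2 (by omega))
    have h4 : f a ≤ f i := hf (Fin.le_def.2 (by omega))
    rw [ha] at h3
    exact absurd (lt_of_lt_of_le hlt h3) (not_lt.2 h4)

theorem MS_zero {n m : ℕ} {f : Fin n → Fin m} (hf : f ∈ MS n m) (i : Fin n) (hi : (i : ℕ) = 0) :
    (f i : ℕ) = 0 := by
  obtain ⟨hm, hs⟩ := mem_MS.1 hf
  have h0 : 0 < m := lt_of_le_of_lt (Nat.zero_le _) (f i).2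
  obtain ⟨a, ha⟩ := hs ⟨0, h0⟩
  have : f i ≤ f a := hm (Fin.le_def.2 (by omega))
  rw [ha, Fin.le_def] at this
  simpa using this

theorem MS_succ {n m : ℕ} {f : Fin n → Fin m} (hf : f ∈ MS n m) (i j : Fin n)
    (hij : (i : ℕ) + 1 = j) : (f j : ℕ) = f i ∨ (f j : ℕ) = f i + 1 := by
  obtain ⟨hm, hs⟩ := mem_MS.1 hf
  have h1 : f i ≤ f j := hm (Fin.le_def.2 (by omega))
  rw [Fin.le_def] at h1
  by_contra hcon
  push Not at hcon
  obtain ⟨a, ha⟩ := hs ⟨f i + 1, by have := (f j).2; omega⟩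
  have ha' := congrArg Fin.val ha
  simp only at ha'
  rcases le_or_gt a i with h | h
  · have := Fin.le_def.1 (hm h); omega
  · have : f j ≤ f a := hm (Fin.le_def.2 (by have := Fin.lt_def.1 h; omega))
    have := Fin.le_def.1 this
    omega

theorem MS_last {n m : ℕ} {f : Fin n → Fin m} (hf : f ∈ MS n m) (i : Fin n)
    (hi : (i : ℕ) + 1 = n) : (f i : ℕ) + 1 = m := by
  obtain ⟨hm, hs⟩ := mem_MS.1 hf
  have h0 := (f i).2
  obtain ⟨a, ha⟩ := hs ⟨m - 1, by omega⟩
  have : f a ≤ f i := hm (Fin.le_def.2 (by omega))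
  rw [ha, Fin.le_def] at this
  simp only at this
  omega

theorem count_cut {n m : ℕ} (T : Finset ℕ) (hT : T ⊆ Finset.Ico 1 n)
    (hc : T.card = m) : Nat.count (· ∈ T) n = m := by
  rw [Nat.count_eq_card_filter_range, ← hc]
  congr 1
  ext t
  simp only [Finset.mem_filter, Finset.mem_range]
  constructor
  · exact fun h => h.2
  · intro h
    have := Finset.mem_Ico.1 (hT h)
    exact ⟨this.2, h⟩

theorem card_sum_type {n m : ℕ} (hn : 1 ≤ n) (π : Equiv.Perm (Fin n))
    [DecidablePred fun f : Fin n → Fin (m + 1) => Monotone (f ∘ π.symm)] :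
    ((MS n (m + 1)).filter (fun f => Monotone (f ∘ π.symm))).card = (cuts π).card.choose m := by
  classical
  rw [← Finset.card_powersetCard]
  symm
  have hval : ∀ T ∈ Finset.powersetCard m (cuts π), ∀ i : Fin n,
      Nat.count (· ∈ T) (i + 1) < m + 1 := by
    intro T hT i
    rw [Finset.mem_powersetCard] at hT
    have h2 := count_cut T (fun t ht => Finset.mem_Ico.2 (mem_cuts.1 (hT.1 ht)).1) hT.2
    have := Nat.count_monotone (· ∈ T) (show (i : ℕ) + 1 ≤ n from i.2)
    omega
  refine Finset.card_bij (fun T hT i => (⟨Nat.count (· ∈ T) (i + 1), hval T hT i⟩ : Fin (m + 1)))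
    ?_ ?_ ?_
  · intro T hT
    have hT' := Finset.mem_powersetCard.1 hT
    have hsub : T ⊆ Finset.Ico 1 n := fun t ht => Finset.mem_Ico.2 (mem_cuts.1 (hT'.1 ht)).1
    have hmono : Monotone (fun i : Fin n =>
        (⟨Nat.count (· ∈ T) (i + 1), hval T hT i⟩ : Fin (m + 1))) := by
      intro i j hij
      rw [Fin.le_def]
      exact Nat.count_monotone _ (by have := Fin.le_def.1 hij; omega)
    rw [Finset.mem_filter, mem_MS]
    refine ⟨⟨hmono, ?_⟩, ?_⟩
    · intro k
      rcases Nat.eq_zero_or_pos (k : ℕ) with h0 | h0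
      · refine ⟨⟨0, hn⟩, ?_⟩
        ext
        simp only [zero_add]
        rw [h0, Nat.count_succ]
        simp only [Nat.count_zero, zero_add]
        rw [if_neg]
        intro h
        have := Finset.mem_Ico.1 (hsub h)
        omega
      · have hfin : (Set.ofPred (· ∈ T)).Finite := T.finite_toSet
        have hk : (k : ℕ) - 1 < hfin.toFinset.card := by
          have : hfin.toFinset = T := by
            ext x; rw [Set.Finite.mem_toFinset]; rfl
          rw [this, hT'.2]; have := k.2; omega
        have hmem : Nat.nth (· ∈ T) (k - 1) ∈ T := Nat.nth_mem_of_lt_card hfin hk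
        have := Finset.mem_Ico.1 (hsub hmem)
        refine ⟨⟨Nat.nth (· ∈ T) (k - 1), this.2⟩, ?_⟩
        ext
        simp only
        rw [Nat.count_nth_succ (fun hf => hk)]
        omega
    · have : (fun i : Fin n => (⟨Nat.count (· ∈ T) (i + 1), hval T hT i⟩ : Fin (m + 1))) ∘ π.symm
          = (fun i : Fin n => (⟨Nat.count (· ∈ T) (i + 1), hval T hT i⟩ : Fin (m + 1))) := by
        funext i
        ext
        simp only [Function.comp_apply]
        rw [Nat.count_eq_card_filter_range, Nat.count_eq_card_filter_range]
        congr 1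
        ext t
        simp only [Finset.mem_filter, Finset.mem_range, and_congr_left_iff]
        intro ht
        have := (mem_cuts.1 (hT'.1 ht)).2 (π.symm i)
        simp only [Equiv.apply_symm_apply] at this
        omega
      rw [this]; exact hmono
  · have key : ∀ T ∈ Finset.powersetCard m (cuts π), ∀ T' ∈ Finset.powersetCard m (cuts π),
      (∀ i : Fin n, Nat.count (· ∈ T) (i + 1) = Nat.count (· ∈ T') (i + 1)) → T ⊆ T' := by
      intro T hT T' hT' h t ht
      have h1 := mem_cuts.1 ((Finset.mem_powersetCard.1 hT).1 ht)
      have e1 := h ⟨t, h1.1.2⟩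
      have e2 := h ⟨t - 1, by omega⟩
      simp only at e1 e2
      rw [show t - 1 + 1 = t by omega] at e2
      rw [Nat.count_succ, Nat.count_succ, if_pos ht, e2] at e1
      by_contra hcon
      rw [if_neg hcon] at e1
      omega
    intro T hT T' hT' h
    have h' : ∀ i : Fin n, Nat.count (· ∈ T) (i + 1) = Nat.count (· ∈ T') (i + 1) := by
      intro i
      have := congrArg Fin.val (congrFun h i)
      exact this
    exact Finset.Subset.antisymm (key T hT T' hT' h') (key T' hT' T hT fun i => (h' i).symm)
  · intro f hf
    rw [Finset.mem_filter] at hf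
    obtain ⟨hfM, hfπ⟩ := hf
    have hmono := (mem_MS.1 hfM).1
    let T : Finset ℕ := (Finset.Ico 1 n).filter
      (fun t => ∃ i j : Fin n, (i : ℕ) + 1 = j ∧ (j : ℕ) = t ∧ f i < f j)
    have hsub : T ⊆ Finset.Ico 1 n := Finset.filter_subset _ _
    have hcount : ∀ k (hk : k < n), Nat.count (· ∈ T) (k + 1) = f ⟨k, hk⟩ := by
      intro k
      induction k with
      | zero =>
        intro hk
        rw [MS_zero hfM ⟨0, hk⟩ rfl, Nat.count_succ, if_neg]
        · simp
        · intro h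
          have := Finset.mem_Ico.1 (hsub h)
          omega
      | succ k ih =>
        intro hk
        rw [Nat.count_succ, ih (by omega)]
        have h1 := MS_succ hfM ⟨k, by omega⟩ ⟨k + 1, hk⟩ rfl
        by_cases hm : k + 1 ∈ T
        · rw [if_pos hm]
          obtain ⟨_, i, j, hij, hj, hlt⟩ := Finset.mem_filter.1 hm
          have hk' : k < n := by omega
          have ei : i = ⟨k, hk'⟩ := by ext; simp; omega
          have ej : j = ⟨k + 1, hk⟩ := by ext; simp; omega
          rw [ei, ej, Fin.lt_def] at hlt
          omega
        · rw [if_neg hm]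
          rcases h1 with h1 | h1
          · rw [h1]; rfl
          · exfalso
            apply hm
            refine Finset.mem_filter.2 ⟨Finset.mem_Ico.2 ⟨by omega, hk⟩, ⟨k, by omega⟩,
              ⟨k + 1, hk⟩, rfl, rfl, ?_⟩
            rw [Fin.lt_def]; omega
    have hTc : T.card = m := by
      have h1 := hcount (n - 1) (by omega)
      have h2 := MS_last hfM ⟨n - 1, by omega⟩ (by simp; omega)
      rw [show n - 1 + 1 = n by omega, count_cut T hsub rfl] at h1
      omega
    refine ⟨T, Finset.mem_powersetCard.2 ⟨?_, hTc⟩, ?_⟩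
    · intro t ht
      obtain ⟨_, i, j, hij, rfl, hlt⟩ := Finset.mem_filter.1 ht
      exact cuts_of_mono hmono hfπ i j hij hlt
    · funext i
      ext
      exact hcount i i.2

theorem partA {n : ℕ} (hn : 1 ≤ n) (π : Equiv.Perm (Fin n))
    [∀ m, DecidablePred fun f : Fin n → Fin m => Monotone (f ∘ π.symm)] :
    ∑ m ∈ Finset.Icc 2 n, (-1 : ℤ) ^ m * ((MS n m).filter (fun f => Monotone (f ∘ π.symm))).card
      = if (cuts π).Nonempty then 1 else 0 := by
  have hK : (cuts π).card ≤ n - 1 := by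
    have := Finset.card_le_card (Finset.filter_subset _ _ : cuts π ⊆ Finset.Ico 1 n)
    rw [Nat.card_Ico] at this
    exact this
  have h1 : ∑ m ∈ Finset.Icc 2 n, (-1 : ℤ) ^ m *
      ((MS n m).filter (fun f => Monotone (f ∘ π.symm))).card
      = ∑ j ∈ Finset.range (n - 1), (-1 : ℤ) ^ j * (cuts π).card.choose (j + 1) := by
    symm
    refine Finset.sum_bij (fun j _ => j + 2) ?_ ?_ ?_ ?_
    · intro j hj; rw [Finset.mem_range] at hj; rw [Finset.mem_Icc]; omega
    · intro a _ b _ h; omega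
    · intro b hb; rw [Finset.mem_Icc] at hb
      exact ⟨b - 2, by rw [Finset.mem_range]; omega, by omega⟩
    · intro j _
      rw [card_sum_type hn]
      ring
  rw [h1]
  have h2 := Int.alternating_sum_range_choose (n := (cuts π).card)
  have h3 : ∑ i ∈ Finset.range (n - 1 + 1), (-1 : ℤ) ^ i * (cuts π).card.choose i
      = ∑ i ∈ Finset.range ((cuts π).card + 1), (-1 : ℤ) ^ i * (cuts π).card.choose i := by
    symm
    refine Finset.sum_subset ?_ ?_
    · intro i; simp only [Finset.mem_range]; omega
    · intro i _ hi
      rw [Nat.choose_eq_zero_of_lt (by simp only [Finset.mem_range] at hi; omega)]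
      simp
  rw [h2, Finset.sum_range_succ'] at h3
  simp only [pow_succ] at h3
  have h4 : ∑ j ∈ Finset.range (n - 1), (-1 : ℤ) ^ j * (cuts π).card.choose (j + 1)
     = - ∑ j ∈ Finset.range (n - 1), (-1 : ℤ) ^ j * (-1) * (cuts π).card.choose (j + 1) := by
    rw [← Finset.sum_neg_distrib]
    refine Finset.sum_congr rfl fun j _ => by ring
  rw [h4]
  simp only [Nat.choose_zero_right, pow_zero, Nat.cast_one, mul_one] at h3
  by_cases hc : (cuts π).Nonempty
  · rw [if_pos hc]
    rw [if_neg (Finset.card_ne_zero.2 hc)] at h3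
    linarith
  · rw [if_neg hc]
    rw [if_pos (by simpa [Finset.not_nonempty_iff_eq_empty] using hc)] at h3
    linarith

def Cvx {n : ℕ} (g : Fin n → Fin n) (B : Finset (Fin n)) : Prop :=
  ∀ x ∈ B, ∀ y ∈ B, ∀ z, g x ≤ g z → g z ≤ g y → z ∈ B

def Blk {n : ℕ} (π : Equiv.Perm (Fin n)) (B : Finset (Fin n)) : Prop :=
  Cvx id B ∧ Cvx π B

theorem Cvx.union {n : ℕ} {g : Fin n → Fin n} {A B : Finset (Fin n)} (hA : Cvx g A)
    (hB : Cvx g B) {x : Fin n} (hxA : x ∈ A) (hxB : x ∈ B) : Cvx g (A ∪ B) := by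
  intro a ha b hb z h1 h2
  rw [Finset.mem_union] at *
  rcases le_total (g z) (g x) with h | h
  · rcases ha with ha | ha
    · exact Or.inl (hA a ha x hxA z h1 h)
    · exact Or.inr (hB a ha x hxB z h1 h)
  · rcases hb with hb | hb
    · exact Or.inl (hA x hxA b hb z h h2)
    · exact Or.inr (hB x hxB b hb z h h2)

theorem Blk.union {n : ℕ} {π : Equiv.Perm (Fin n)} {A B : Finset (Fin n)} (hA : Blk π A)
    (hB : Blk π B) {x : Fin n} (hxA : x ∈ A) (hxB : x ∈ B) : Blk π (A ∪ B) :=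
  ⟨hA.1.union hB.1 hxA hxB, hA.2.union hB.2 hxA hxB⟩

theorem Blk.singleton {n : ℕ} (π : Equiv.Perm (Fin n)) (x : Fin n) : Blk π {x} := by
  constructor
  · intro a ha b hb z h1 h2
    rw [Finset.mem_singleton] at *
    subst ha; subst hb
    exact le_antisymm h2 h1
  · intro a ha b hb z h1 h2
    rw [Finset.mem_singleton] at *
    subst ha; subst hb
    exact π.injective (le_antisymm h2 h1)

theorem isPermBlock_iff {n : ℕ} (π : Equiv.Perm (Fin n)) (B : Finset (Fin n)) :
    IsPermBlock π B ↔ B.Nonempty ∧ Blk π B := by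
  have key : ∀ S : Finset (Fin n), S.Nonempty →
      ((∃ i j : Fin n, S = Finset.Icc i j) ↔ Cvx id S) := by
    intro S hS
    constructor
    · rintro ⟨i, j, rfl⟩ x hx y hy z h1 h2
      simp only [Finset.mem_Icc, id] at *
      exact ⟨hx.1.trans h1, h2.trans hy.2⟩
    · intro h
      refine ⟨S.min' hS, S.max' hS, ?_⟩
      ext z
      rw [Finset.mem_Icc]
      exact ⟨fun hz => ⟨S.min'_le z hz, S.le_max' z hz⟩,
        fun hz => h _ (S.min'_mem hS) _ (S.max'_mem hS) z hz.1 hz.2⟩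
  unfold IsPermBlock Blk
  refine and_congr_right fun hB => ?_
  rw [key B hB, key _ (hB.image π)]
  refine and_congr_right fun _ => ?_
  constructor
  · intro h x hx y hy z h1 h2
    have := h (π x) (Finset.mem_image_of_mem _ hx) (π y) (Finset.mem_image_of_mem _ hy) (π z) h1 h2
    simpa using this
  · intro h x hx y hy z h1 h2
    obtain ⟨x, hx', rfl⟩ := Finset.mem_image.1 hx; replace hx := hx'
    obtain ⟨y, hy', rfl⟩ := Finset.mem_image.1 hy; replace hy := hy'
    obtain ⟨z, rfl⟩ := π.surjective z
    exact Finset.mem_image_of_mem _ (h x hx y hy z h1 h2)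

theorem isSimple_iff {n : ℕ} (π : Equiv.Perm (Fin n)) :
    IsSimplePerm π ↔ ∀ B : Finset (Fin n), B.Nonempty → Blk π B → B.card = 1 ∨ B = Finset.univ := by
  unfold IsSimplePerm
  simp only [isPermBlock_iff, and_imp]

theorem Cvx.rev {n : ℕ} {g : Fin n → Fin n} {B : Finset (Fin n)} (h : Cvx g B) :
    Cvx (fun x => Fin.rev (g x)) B := by
  intro x hx y hy z h1 h2
  rw [Fin.rev_le_rev] at h1 h2
  exact h y hy x hx z h2 h1

theorem Blk.of_rev {n : ℕ} {π : Equiv.Perm (Fin n)} {B : Finset (Fin n)}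
    (h : Blk (π.trans Fin.revPerm) B) : Blk π B := by
  refine ⟨h.1, ?_⟩
  have := h.2.rev
  intro x hx y hy z h1 h2
  exact this x hx y hy z (by simpa using h1) (by simpa using h2)

theorem simple_rev {n : ℕ} {π : Equiv.Perm (Fin n)} (h : IsSimplePerm π) :
    IsSimplePerm (π.trans Fin.revPerm) := by
  rw [isSimple_iff] at *
  exact fun B hB hb => h B hB hb.of_rev

/-- a simple permutation of length at least three is not decomposable -/
theorem simple_no_split {m : ℕ} (hm : 3 ≤ m) {σ : Equiv.Perm (Fin m)} (hσ : IsSimplePerm σ)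
    (B : Finset (Fin m)) (h1 : B.Nonempty) (h2 : Bᶜ.Nonempty)
    (h : ∀ k ∈ B, ∀ l, l ∉ B → k < l ∧ σ k < σ l) : False := by
  rw [isSimple_iff] at hσ
  have a1 : Blk σ B := by
    constructor
    · intro x hx y hy z h3 h4
      by_contra hz
      exact absurd (h y hy z hz).1 (not_lt.2 h4)
    · intro x hx y hy z h3 h4
      by_contra hz
      exact absurd (h y hy z hz).2 (not_lt.2 h4)
  have a2 : Blk σ Bᶜ := by
    constructor
    · intro x hx y hy z h3 h4
      rw [Finset.mem_compl] at *
      intro hz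
      exact absurd (h z hz x hx).1 (not_lt.2 h3)
    · intro x hx y hy z h3 h4
      rw [Finset.mem_compl] at *
      intro hz
      exact absurd (h z hz x hx).2 (not_lt.2 h3)
  have c1 : B.card = 1 := by
    rcases hσ B h1 a1 with h | h
    · exact h
    · subst h; simp at h2
  have c2 : Bᶜ.card = 1 := by
    rcases hσ Bᶜ h2 a2 with h | h
    · exact h
    · rw [Finset.compl_eq_univ_iff] at h
      subst h; simp at h1
  have := Finset.card_add_card_compl B
  rw [c1, c2, Fintype.card_fin] at this
  omega

theorem infl_le {n m : ℕ} {π : Equiv.Perm (Fin n)} {σ : Equiv.Perm (Fin m)} {f : Fin n → Fin m}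
    (h : Monotone (σ ∘ f ∘ π.symm)) {x y : Fin n} (hxy : π x ≤ π y) : σ (f x) ≤ σ (f y) := by
  have := h hxy
  simpa using this

theorem infl_lt {n m : ℕ} {π : Equiv.Perm (Fin n)} {σ : Equiv.Perm (Fin m)} {f : Fin n → Fin m}
    (h : Monotone (σ ∘ f ∘ π.symm)) {x y : Fin n} (hxy : σ (f x) < σ (f y)) : π x < π y := by
  by_contra hc
  exact absurd (infl_le h (not_lt.1 hc)) (not_le.2 hxy)

theorem mono_lt {n m : ℕ} {f : Fin n → Fin m} (h : Monotone f) {x y : Fin n}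
    (hxy : f x < f y) : x < y := by
  by_contra hc
  exact absurd (h (not_lt.1 hc)) (not_le.2 hxy)

theorem infl_rev {n m : ℕ} {π : Equiv.Perm (Fin n)} {σ : Equiv.Perm (Fin m)} {f : Fin n → Fin m}
    (h : Monotone (σ ∘ f ∘ π.symm)) :
    Monotone ((σ.trans Fin.revPerm) ∘ f ∘ (π.trans Fin.revPerm).symm) := by
  intro u v huv
  have := h (Fin.rev_le_rev.2 huv)
  simpa using this

theorem cuts_empty_of_simple {n m : ℕ} (hm : 3 ≤ m) {π : Equiv.Perm (Fin n)}
    {σ : Equiv.Perm (Fin m)} (hσ : IsSimplePerm σ) {f : Fin n → Fin m} (hf : f ∈ MS n m)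
    (h : Monotone (σ ∘ f ∘ π.symm)) : cuts π = ∅ := by
  classical
  obtain ⟨hmono, hsurj⟩ := mem_MS.1 hf
  by_contra hne
  obtain ⟨t, ht⟩ := Finset.nonempty_iff_ne_empty.2 hne
  obtain ⟨⟨ht1, htn⟩, hcut⟩ := mem_cuts.1 ht
  have P : ∀ x y : Fin n, (x : ℕ) < t → t ≤ (y : ℕ) → σ (f x) ≤ σ (f y) := by
    intro x y hx hy
    apply infl_le h
    have h1 := (hcut x).2 hx
    have h2 := (hcut y).not.2 (by omega)
    rw [Fin.le_def]; omega
  let i : Fin n := ⟨t - 1, by omega⟩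
  let j : Fin n := ⟨t, htn⟩
  have hij : f i ≤ f j := hmono (Fin.le_def.2 (by simp [i, j]))
  have lei : ∀ x : Fin n, (x : ℕ) < t → f x ≤ f i := fun x hx =>
    hmono (Fin.le_def.2 (by simp [i]; omega))
  have lej : ∀ x : Fin n, t ≤ (x : ℕ) → f j ≤ f x := fun x hx =>
    hmono (Fin.le_def.2 (by simpa [j] using hx))
  by_cases ha : (f i : ℕ) + 1 < m
  · refine simple_no_split hm hσ (Finset.univ.filter (fun k => k ≤ f i)) ⟨f i, by simp⟩
      ⟨⟨f i + 1, ha⟩, by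
        rw [Finset.mem_compl, Finset.mem_filter]; rintro ⟨_, hc⟩; rw [Fin.le_def] at hc; simp at hc⟩ ?_
    intro k hk l hl
    simp only [Finset.mem_filter, Finset.mem_univ, true_and, not_le] at hk hl
    have hkl : k < l := lt_of_le_of_lt hk hl
    refine ⟨hkl, lt_of_le_of_ne ?_ (fun e => hkl.ne (σ.injective e))⟩
    obtain ⟨y, rfl⟩ := hsurj l
    have hy : t ≤ (y : ℕ) := by
      by_contra hc
      exact absurd (lei y (by omega)) (not_le.2 hl)
    obtain ⟨x, rfl⟩ := hsurj k
    by_cases hx : (x : ℕ) < t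
    · exact P x y hx hy
    · have h1 := lej x (by omega)
      have : f x = f i := le_antisymm hk (hij.trans h1)
      rw [this]
      exact P i y (by simp [i]; omega) hy
  · refine simple_no_split hm hσ (Finset.univ.filter (fun k => k < f i))
      ⟨⟨0, by omega⟩, by
        rw [Finset.mem_filter]; refine ⟨Finset.mem_univ _, ?_⟩; rw [Fin.lt_def]; simp only; omega⟩ ⟨f i, by simp⟩ ?_
    intro k hk l hl
    simp only [Finset.mem_filter, Finset.mem_univ, true_and, not_lt] at hk hl
    have hkl : k < l := lt_of_lt_of_le hk hl
    refine ⟨hkl, lt_of_le_of_ne ?_ (fun e => hkl.ne (σ.injective e))⟩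
    have hlj : l = f j := by
      ext
      have := l.2; have := (f j).2
      rw [Fin.le_def] at hl hij
      omega
    obtain ⟨x, rfl⟩ := hsurj k
    rw [hlj]
    refine P x j ?_ (by simp [j])
    by_contra hc
    exact absurd (hij.trans (lej x (by omega))) (not_le.2 hk)

theorem blk_preimage {n m : ℕ} {π : Equiv.Perm (Fin n)}
    {σ : Equiv.Perm (Fin m)} {f : Fin n → Fin m} (hmono : Monotone f)
    (h : Monotone (σ ∘ f ∘ π.symm)) {C : Finset (Fin m)} (hC : Blk σ C) :
    Blk π (Finset.univ.filter (fun x => f x ∈ C)) := by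
  constructor
  · intro x hx y hy z h1 h2
    simp only [Finset.mem_filter, Finset.mem_univ, true_and] at *
    exact hC.1 _ hx _ hy _ (hmono h1) (hmono h2)
  · intro x hx y hy z h1 h2
    simp only [Finset.mem_filter, Finset.mem_univ, true_and] at *
    exact hC.2 _ hx _ hy _ (infl_le h h1) (infl_le h h2)

/-- every proper block lies in a fibre -/
theorem block_in_fibre {n m : ℕ} (hm : 3 ≤ m) {π : Equiv.Perm (Fin n)}
    {σ : Equiv.Perm (Fin m)} (hσ : IsSimplePerm σ) {f : Fin n → Fin m} (hf : f ∈ MS n m)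
    (h : Monotone (σ ∘ f ∘ π.symm)) {B : Finset (Fin n)} (hB : Blk π B) (hne : B ≠ Finset.univ)
    {x y : Fin n} (hx : x ∈ B) (hy : y ∈ B) : f x = f y := by
  classical
  obtain ⟨hmono, hsurj⟩ := mem_MS.1 hf
  rw [isSimple_iff] at hσ
  have hC : Blk σ (B.image f) := by
    constructor
    · intro a ha b hb z h1 h2
      obtain ⟨a, ha', rfl⟩ := Finset.mem_image.1 ha; replace ha := ha'
      obtain ⟨b, hb', rfl⟩ := Finset.mem_image.1 hb; replace hb := hb'
      obtain ⟨z, rfl⟩ := hsurj z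
      simp only [id] at h1 h2
      rcases h1.eq_or_lt with h1 | h1
      · rw [← h1]; exact Finset.mem_image_of_mem _ ha
      rcases h2.eq_or_lt with h2 | h2
      · rw [h2]; exact Finset.mem_image_of_mem _ hb
      exact Finset.mem_image_of_mem _ (hB.1 a ha b hb z (mono_lt hmono h1).le (mono_lt hmono h2).le)
    · intro a ha b hb z h1 h2
      obtain ⟨a, ha', rfl⟩ := Finset.mem_image.1 ha; replace ha := ha'
      obtain ⟨b, hb', rfl⟩ := Finset.mem_image.1 hb; replace hb := hb'
      obtain ⟨z, rfl⟩ := hsurj z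
      rcases h1.eq_or_lt with h1 | h1
      · rw [← σ.injective h1]; exact Finset.mem_image_of_mem _ ha
      rcases h2.eq_or_lt with h2 | h2
      · rw [σ.injective h2]; exact Finset.mem_image_of_mem _ hb
      exact Finset.mem_image_of_mem _ (hB.2 a ha b hb z (infl_lt h h1).le (infl_lt h h2).le)
  rcases hσ _ ⟨f x, Finset.mem_image_of_mem _ hx⟩ hC with h1 | h1
  · obtain ⟨c, hc⟩ := Finset.card_eq_one.1 h1
    have e1 := Finset.mem_image_of_mem f hx
    have e2 := Finset.mem_image_of_mem f hy
    rw [hc, Finset.mem_singleton] at e1 e2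
    rw [e1, e2]
  · exfalso
    obtain ⟨p, hp⟩ : ∃ p, p ∉ B := by
      by_contra hcon
      push Not at hcon
      exact hne (Finset.eq_univ_iff_forall.2 hcon)
    have hrep : ∀ k, ∃ a ∈ B, f a = k := fun k => by
      have : k ∈ B.image f := by rw [h1]; exact Finset.mem_univ k
      simpa using this
    have hD : Blk σ ({f p}ᶜ) := by
      constructor
      · intro u hu v hv z h2 h3
        simp only [Finset.mem_compl, Finset.mem_singleton, id] at *
        rintro rfl
        obtain ⟨a, ha, rfl⟩ := hrep u
        obtain ⟨b, hb, rfl⟩ := hrep v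
        exact hp (hB.1 a ha b hb p (mono_lt hmono (lt_of_le_of_ne h2 hu)).le
          (mono_lt hmono (lt_of_le_of_ne h3 (Ne.symm hv))).le)
      · intro u hu v hv z h2 h3
        simp only [Finset.mem_compl, Finset.mem_singleton] at *
        rintro rfl
        obtain ⟨a, ha, rfl⟩ := hrep u
        obtain ⟨b, hb, rfl⟩ := hrep v
        exact hp (hB.2 a ha b hb p
          (infl_lt h (lt_of_le_of_ne h2 (fun e => hu (σ.injective e)))).le
          (infl_lt h (lt_of_le_of_ne h3 (fun e => hv (σ.injective e).symm))).le)
    have hcard : (({f p}ᶜ : Finset (Fin m))).card = m - 1 := by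
      rw [Finset.card_compl, Fintype.card_fin, Finset.card_singleton]
    have hnon : ({f p}ᶜ : Finset (Fin m)).Nonempty := by
      rw [← Finset.card_pos]; omega
    rcases hσ _ hnon hD with h2 | h2
    · omega
    · have := Finset.mem_univ (f p)
      rw [← h2] at this
      simp at this

theorem ker_imp {n m m' : ℕ} (hm : 3 ≤ m) (hm' : 3 ≤ m') {π : Equiv.Perm (Fin n)}
    {σ : Equiv.Perm (Fin m)} {f : Fin n → Fin m} (hf : f ∈ MS n m)
    (h : Monotone (σ ∘ f ∘ π.symm))
    {σ' : Equiv.Perm (Fin m')} (hσ' : IsSimplePerm σ') {f' : Fin n → Fin m'} (hf' : f' ∈ MS n m')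
    (h' : Monotone (σ' ∘ f' ∘ π.symm)) {x y : Fin n} (hxy : f x = f y) : f' x = f' y := by
  classical
  obtain ⟨hmono, hsurj⟩ := mem_MS.1 hf
  refine block_in_fibre hm' hσ' hf' h' (blk_preimage hmono h (Blk.singleton σ (f x))) ?_
    (x := x) (y := y) (by simp) (by simp [hxy])
  intro hu
  obtain ⟨k, hk⟩ : ∃ k : Fin m, k ≠ f x := by
    have : Nontrivial (Fin m) := Fin.nontrivial_iff_two_le.2 (by omega)
    exact exists_ne _
  obtain ⟨a, rfl⟩ := hsurj k
  have := Finset.mem_univ a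
  rw [← hu] at this
  simp at this
  exact hk this

theorem MS_le_of_ker {n m m' : ℕ} {f : Fin n → Fin m} (hf : f ∈ MS n m) {f' : Fin n → Fin m'}
    (h : ∀ x y, f' x = f' y → f x = f y) : m ≤ m' := by
  obtain ⟨hmono, hsurj⟩ := mem_MS.1 hf
  have : Function.Injective (fun k => f' (Function.surjInv hsurj k)) := by
    intro k l hkl
    have := h _ _ hkl
    rwa [Function.surjInv_eq hsurj, Function.surjInv_eq hsurj] at this
  simpa using Fintype.card_le_of_injective _ this

theorem MS_ext {n m : ℕ} {f : Fin n → Fin m} (hf : f ∈ MS n m) {f' : Fin n → Fin m}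
    (hf' : f' ∈ MS n m) (h : ∀ x y, f x = f y ↔ f' x = f' y) : f = f' := by
  have key : ∀ k (hk : k < n), (f ⟨k, hk⟩ : ℕ) = f' ⟨k, hk⟩ := by
    intro k
    induction k with
    | zero => intro hk; rw [MS_zero hf _ rfl, MS_zero hf' _ rfl]
    | succ k ih =>
      intro hk
      have h0 := ih (by omega)
      have h1 := MS_succ hf ⟨k, by omega⟩ ⟨k + 1, hk⟩ rfl
      have h2 := MS_succ hf' ⟨k, by omega⟩ ⟨k + 1, hk⟩ rfl
      have h3 := h ⟨k, by omega⟩ ⟨k + 1, hk⟩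
      rw [Fin.ext_iff, Fin.ext_iff] at h3
      omega
  funext x
  ext
  exact key x x.2

theorem sigma_unique {n m : ℕ} {π : Equiv.Perm (Fin n)} {f : Fin n → Fin m} (hf : f ∈ MS n m)
    {σ σ' : Equiv.Perm (Fin m)} (h : Monotone (σ ∘ f ∘ π.symm))
    (h' : Monotone (σ' ∘ f ∘ π.symm)) : σ = σ' := by
  obtain ⟨hmono, hsurj⟩ := mem_MS.1 hf
  have h1 : Monotone (id ∘ (σ'.symm.trans σ)) := by
    intro u v huv
    obtain ⟨k, rfl⟩ := σ'.surjective u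
    obtain ⟨l, rfl⟩ := σ'.surjective v
    obtain ⟨x, rfl⟩ := hsurj k
    obtain ⟨y, rfl⟩ := hsurj l
    simp only [Function.comp_apply, Equiv.trans_apply, Equiv.symm_apply_apply, id]
    rcases huv.eq_or_lt with e | e
    · rw [σ'.injective e]
    · exact infl_le h (infl_lt h' e).le
  have h2 : Monotone (id ∘ (Equiv.refl (Fin m))) := monotone_id
  have h3 := Tuple.unique_monotone h1 h2
  ext k
  have := congrFun h3 (σ' k)
  simp at this
  rw [this]

theorem lower_mem {n : ℕ} (S : Finset (Fin n)) (h : ∀ c ∈ S, ∀ b, b ∉ S → c < b) (i : Fin n) :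
    i ∈ S ↔ (i : ℕ) < S.card := by
  constructor
  · intro hi
    have hsub : Finset.Iic i ⊆ S := by
      intro j hj
      by_contra hc
      exact absurd (h i hi j hc) (not_lt.2 (Finset.mem_Iic.1 hj))
    have := Finset.card_le_card hsub
    rw [Fin.card_Iic] at this
    omega
  · intro hi
    by_contra hc
    have hsub : S ⊆ Finset.Iio i := fun j hj => Finset.mem_Iio.2 (h j hj i hc)
    have := Finset.card_le_card hsub
    rw [Fin.card_Iio] at this
    omega

theorem cuts_of_split {n : ℕ} {π : Equiv.Perm (Fin n)} (S : Finset (Fin n)) (h1 : S.Nonempty)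
    (h2 : ∃ b, b ∉ S) (h3 : ∀ c ∈ S, ∀ b, b ∉ S → c < b) (h4 : ∀ c ∈ S, ∀ b, b ∉ S → π c < π b) :
    (cuts π).Nonempty := by
  refine ⟨S.card, mem_cuts.2 ⟨⟨Finset.card_pos.2 h1, ?_⟩, ?_⟩⟩
  · obtain ⟨b, hb⟩ := h2
    rw [lower_mem S h3] at hb
    have := b.2
    omega
  · intro i
    rw [← lower_mem S h3 i]
    have h5 : ∀ c ∈ S.map π.toEmbedding, ∀ b, b ∉ S.map π.toEmbedding → c < b := by
      intro c hc b hb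
      obtain ⟨c, hc', rfl⟩ := Finset.mem_map.1 hc
      obtain ⟨b, rfl⟩ := π.surjective b
      exact h4 c hc' b (fun hbS => hb (Finset.mem_map_of_mem _ hbS))
    have := lower_mem _ h5 (π i)
    rw [Finset.card_map] at this
    rw [← this]
    simp

theorem no_split {n : ℕ} {π : Equiv.Perm (Fin n)} (hc : cuts π = ∅)
    (hr : cuts (π.trans Fin.revPerm) = ∅) (S : Finset (Fin n)) (h1 : S.Nonempty)
    (h2 : ∃ b, b ∉ S) (h3 : ∀ c ∈ S, ∀ b, b ∉ S → c < b) :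
    ¬ ((∀ c ∈ S, ∀ b, b ∉ S → π c < π b) ∨ (∀ c ∈ S, ∀ b, b ∉ S → π b < π c)) := by
  rintro (h | h)
  · have := cuts_of_split S h1 h2 h3 h
    rw [hc] at this
    simp at this
  · have := cuts_of_split (π := π.trans Fin.revPerm) S h1 h2 h3 (by
      intro c hc b hb
      simpa using h c hc b hb)
    rw [hr] at this
    simp at this

theorem cover_order {n : ℕ} {g : Fin n → Fin n} (hg : Function.Injective g)
    {A B : Finset (Fin n)} (hA : Cvx g A) (hB : Cvx g B)
    (hu : ∀ x, x ∈ A ∨ x ∈ B) {p q : Fin n} (hp : p ∉ A) (hq : q ∉ B) :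
    (∀ b ∈ B, ∀ c, c ∉ B → g c < g b) ∨ (∀ b ∈ B, ∀ c, c ∉ B → g b < g c) := by
  have hpB : p ∈ B := (hu p).resolve_left hp
  have hqA : q ∈ A := (hu q).resolve_right hq
  have hpq : g q ≠ g p := fun e => hq (hg e ▸ hpB)
  rcases lt_or_gt_of_ne hpq with hlt | hlt
  · left
    intro b hb c hc
    have hcA : c ∈ A := (hu c).resolve_right hc
    by_contra hcon
    rw [not_lt] at hcon
    rcases le_or_gt (g c) (g p) with h | h
    · exact hc (hB b hb p hpB c hcon h)
    · exact hp (hA q hqA c hcA p hlt.le h.le)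
  · right
    intro b hb c hc
    have hcA : c ∈ A := (hu c).resolve_right hc
    by_contra hcon
    rw [not_lt] at hcon
    rcases le_or_gt (g p) (g c) with h | h
    · exact hc (hB p hpB b hb c h hcon)
    · exact hp (hA c hcA q hqA p h.le hlt.le)

theorem union_ne_univ {n : ℕ} {π : Equiv.Perm (Fin n)} (hc : cuts π = ∅)
    (hr : cuts (π.trans Fin.revPerm) = ∅) {A B : Finset (Fin n)} (hA : Blk π A) (hB : Blk π B)
    (hAu : A ≠ Finset.univ) (hBu : B ≠ Finset.univ) : A ∪ B ≠ Finset.univ := by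
  intro h
  have hu : ∀ x, x ∈ A ∨ x ∈ B := fun x => by
    have := Finset.mem_univ x
    rwa [← h, Finset.mem_union] at this
  obtain ⟨p, hp⟩ : ∃ p, p ∉ A := by
    by_contra hcon
    push Not at hcon
    exact hAu (Finset.eq_univ_iff_forall.2 hcon)
  obtain ⟨q, hq⟩ : ∃ q, q ∉ B := by
    by_contra hcon
    push Not at hcon
    exact hBu (Finset.eq_univ_iff_forall.2 hcon)
  have hpB : p ∈ B := (hu p).resolve_left hp
  have o1 := cover_order Function.injective_id hA.1 hB.1 hu hp hq
  have o2 := cover_order π.injective hA.2 hB.2 hu hp hq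
  rcases o1 with o1 | o1
  · refine no_split hc hr Bᶜ ⟨q, by simpa using hq⟩ ⟨p, by simpa using hpB⟩ ?_ ?_
    · intro c hc b hb
      simp only [Finset.mem_compl, not_not] at hc hb
      exact o1 b hb c hc
    · rcases o2 with o2 | o2
      · left
        intro c hc b hb
        simp only [Finset.mem_compl, not_not] at hc hb
        exact o2 b hb c hc
      · right
        intro c hc b hb
        simp only [Finset.mem_compl, not_not] at hc hb
        exact o2 b hb c hc
  · exact no_split hc hr B ⟨p, hpB⟩ ⟨q, hq⟩ o1 o2.symm

theorem exists_MS_of_mono {n : ℕ} (r : Fin n → Fin n) (hr : Monotone r) :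
    ∃ m, ∃ f ∈ MS n m, ∀ x y, f x = f y ↔ r x = r y := by
  classical
  let R := Finset.univ.image r
  have hR : ∀ x, r x ∈ R := fun x => Finset.mem_image_of_mem _ (Finset.mem_univ x)
  let e := R.orderIsoOfFin rfl
  refine ⟨R.card, fun x => e.symm ⟨r x, hR x⟩, mem_MS.2 ⟨?_, ?_⟩, ?_⟩
  · intro x y hxy
    exact e.symm.monotone (hr hxy)
  · intro k
    obtain ⟨x, _, hx⟩ := Finset.mem_image.1 (e k).2
    refine ⟨x, ?_⟩
    simp only
    rw [OrderIso.symm_apply_eq]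
    exact Subtype.ext hx
  · intro x y
    simp

theorem exists_simple {n : ℕ} (hn : 2 ≤ n) {π : Equiv.Perm (Fin n)} (hc : cuts π = ∅)
    (hr : cuts (π.trans Fin.revPerm) = ∅) :
    ∃ m, 3 ≤ m ∧ m ≤ n ∧ ∃ f ∈ MS n m, ∃ σ : Equiv.Perm (Fin m), IsSimplePerm σ ∧
      Monotone (σ ∘ f ∘ π.symm) := by
  classical
  have hex : ∀ x : Fin n, ∃ M : Finset (Fin n), Blk π M ∧ x ∈ M ∧ M ≠ Finset.univ ∧
      ∀ B, Blk π B → x ∈ B → B ≠ Finset.univ → B ⊆ M := by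
    intro x
    have hne : (Finset.univ.filter (fun B : Finset (Fin n) =>
        Blk π B ∧ x ∈ B ∧ B ≠ Finset.univ)).Nonempty := by
      refine ⟨{x}, Finset.mem_filter.2 ⟨Finset.mem_univ _, Blk.singleton π x, by simp, ?_⟩⟩
      intro h
      have := congrArg Finset.card h
      rw [Finset.card_singleton, Finset.card_univ, Fintype.card_fin] at this
      omega
    obtain ⟨M, hM, hmax⟩ := Finset.exists_max_image _ Finset.card hne
    simp only [Finset.mem_filter, Finset.mem_univ, true_and] at hM hmax
    refine ⟨M, hM.1, hM.2.1, hM.2.2, fun B hB hxB hBu => ?_⟩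
    have := hmax (M ∪ B) ⟨hM.1.union hB hM.2.1 hxB, Finset.mem_union_left _ hM.2.1,
      union_ne_univ hc hr hM.1 hB hM.2.2 hBu⟩
    have := Finset.eq_of_subset_of_card_le Finset.subset_union_left this
    rw [this]
    exact Finset.subset_union_right
  choose M hMb hMx hMu hMmax using hex
  have hMeq : ∀ x y, y ∈ M x → M x = M y := by
    intro x y hy
    have h1 : M x ⊆ M y := hMmax y _ (hMb x) hy (hMu x)
    exact Finset.Subset.antisymm h1 (hMmax x _ (hMb y) (h1 (hMx x)) (hMu y))
  let r : Fin n → Fin n := fun x => (M x).min' ⟨x, hMx x⟩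
  have hrm : ∀ x, r x ∈ M x := fun x => Finset.min'_mem _ _
  have hrc : ∀ x y, M x = M y → r x = r y := by
    intro x y h
    simp only [r, h]
  have hrle : ∀ x, r x ≤ x := fun x => Finset.min'_le _ _ (hMx x)
  have hrmono : Monotone r := by
    intro x y hxy
    by_contra hcon
    rw [not_le] at hcon
    have : x ∈ M y := (hMb y).1 (r y) (hrm y) y (hMx y) x (hcon.le.trans (hrle x)) hxy
    exact hcon.ne (hrc _ _ (hMeq _ _ this))
  have hrM : ∀ x y, r x = r y ↔ M x = M y := by
    intro x y
    refine ⟨fun h => ?_, hrc x y⟩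
    rw [hMeq x _ (hrm x), h, ← hMeq y _ (hrm y)]
  obtain ⟨m, f, hf, hker⟩ := exists_MS_of_mono r hrmono
  have hfM : ∀ x y, f x = f y ↔ M x = M y := fun x y => (hker x y).trans (hrM x y)
  obtain ⟨hmono, hsurj⟩ := mem_MS.1 hf
  let rep := Function.surjInv hsurj
  have hrep : ∀ k, f (rep k) = k := Function.surjInv_eq hsurj
  let key : Fin m → Fin n := fun k => π (rep k)
  let σ : Equiv.Perm (Fin m) := (Tuple.sort key).symm
  have hkey : ∀ k l, σ k ≤ σ l → key k ≤ key l := by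
    intro k l hkl
    have := Tuple.monotone_sort key hkl
    simpa [σ] using this
  have hrepM : ∀ x, rep (f x) ∈ M x := by
    intro x
    rw [(hfM x (rep (f x))).1 (hrep _).symm]
    exact hMx _
  have hinf : ∀ x y, π x ≤ π y → σ (f x) ≤ σ (f y) := by
    intro x y hxy
    by_contra hcon
    rw [not_le] at hcon
    have hk := hkey _ _ hcon.le
    have hne : M x ≠ M y := fun e => hcon.ne (by rw [(hfM x y).2 e])
    rcases le_or_gt (key (f x)) (π y) with h | h
    · have h1 : rep (f x) ∈ M y := (hMb y).2 _ (hrepM y) y (hMx y) _ hk h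
      exact hne ((hMeq _ _ (hrepM x)).trans (hMeq _ _ h1).symm)
    · have h1 : y ∈ M x := (hMb x).2 x (hMx x) _ (hrepM x) y hxy h.le
      exact hne (hMeq _ _ h1)
  have hinfl : Monotone (σ ∘ f ∘ π.symm) := by
    intro u v huv
    exact hinf _ _ (by simpa using huv)
  have hsimple : IsSimplePerm σ := by
    rw [isSimple_iff]
    intro C hC hCb
    have hb := blk_preimage hmono hinfl hCb
    by_cases hu : (Finset.univ.filter (fun x => f x ∈ C)) = Finset.univ
    · right
      rw [Finset.eq_univ_iff_forall]
      intro k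
      obtain ⟨x, rfl⟩ := hsurj k
      have := Finset.mem_univ x
      rw [← hu] at this
      simpa using this
    · left
      obtain ⟨k, hk⟩ := hC
      obtain ⟨x, rfl⟩ := hsurj k
      rw [Finset.card_eq_one]
      refine ⟨f x, ?_⟩
      ext l
      rw [Finset.mem_singleton]
      constructor
      · intro hl
        obtain ⟨y, rfl⟩ := hsurj l
        have := hMmax x _ hb (by simpa using hk) hu (show y ∈ _ by simpa using hl)
        exact ((hfM x y).2 (hMeq _ _ this)).symm
      · rintro rfl; exact hk
  have hmn : m ≤ n := by simpa using Fintype.card_le_of_surjective f hsurj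
  refine ⟨m, ?_, hmn, f, hf, σ, hsimple, hinfl⟩
  by_contra hm
  have x0 : Fin n := ⟨0, by omega⟩
  obtain ⟨y0, hy0⟩ : ∃ y, y ∉ M x0 := by
    by_contra hcon
    push Not at hcon
    exact hMu x0 (Finset.eq_univ_iff_forall.2 hcon)
  have hne : f x0 ≠ f y0 := by
    intro e
    apply hy0
    rw [(hfM _ _).1 e]
    exact hMx _
  have hm2 : m = 2 := by
    have := (f x0).2
    have := (f y0).2
    have : (f x0 : ℕ) ≠ f y0 := fun e => hne (Fin.ext e)
    omega
  subst hm2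
  obtain ⟨x1, hx1⟩ := hsurj 0
  obtain ⟨y1, hy1⟩ := hsurj 1
  have h01 : ∀ b : Fin n, b ∉ Finset.univ.filter (fun x => f x = 0) → f b = 1 := by
    intro b hb
    simp only [Finset.mem_filter, Finset.mem_univ, true_and] at hb
    have : (f b : ℕ) ≠ 0 := fun e => hb (Fin.ext e)
    ext
    have := (f b).2
    simp only [Fin.val_one]
    omega
  refine no_split hc hr (Finset.univ.filter (fun x => f x = 0)) ⟨x1, by simpa using hx1⟩
    ⟨y1, by simp [hy1]⟩ ?_ ?_
  · intro c hc b hb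
    have e1 := h01 b hb
    simp only [Finset.mem_filter, Finset.mem_univ, true_and] at hc
    exact mono_lt hmono (by rw [e1, hc]; decide)
  · have hs : σ 0 ≠ σ 1 := fun e => by have := σ.injective e; simp at this
    rcases lt_or_gt_of_ne hs with h | h
    · left
      intro c hc b hb
      have e1 := h01 b hb
      simp only [Finset.mem_filter, Finset.mem_univ, true_and] at hc
      exact infl_lt hinfl (by rw [e1, hc]; exact h)
    · right
      intro c hc b hb
      have e1 := h01 b hb
      simp only [Finset.mem_filter, Finset.mem_univ, true_and] at hc
      exact infl_lt hinfl (by rw [e1, hc]; exact h)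

theorem cuts_disjoint {n : ℕ} {π : Equiv.Perm (Fin n)} (h1 : (cuts π).Nonempty)
    (h2 : (cuts (π.trans Fin.revPerm)).Nonempty) : False := by
  obtain ⟨t, ht⟩ := h1
  obtain ⟨u, hu⟩ := h2
  obtain ⟨⟨ht1, htn⟩, ht⟩ := mem_cuts.1 ht
  obtain ⟨⟨hu1, hun⟩, hu⟩ := mem_cuts.1 hu
  have a1 := (ht ⟨0, by omega⟩).2 (by simp; omega)
  have a2 := (ht ⟨n - 1, by omega⟩).not.2 (by simp; omega)
  have b1 := (hu ⟨0, by omega⟩).2 (by simp; omega)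
  have b2 := (hu ⟨n - 1, by omega⟩).not.2 (by simp; omega)
  simp only [Equiv.trans_apply, Fin.revPerm_apply, Fin.val_rev] at b1 b2
  omega

open Classical in
noncomputable def simpleInfl {n : ℕ} (π : Equiv.Perm (Fin n)) (m : ℕ) :
    Finset ((Fin n → Fin m) × Equiv.Perm (Fin m)) :=
  (MS n m ×ˢ Finset.univ).filter (fun p => IsSimplePerm p.2 ∧ Monotone (p.2 ∘ p.1 ∘ π.symm))

theorem mem_simpleInfl {n : ℕ} {π : Equiv.Perm (Fin n)} {m : ℕ}
    {p : (Fin n → Fin m) × Equiv.Perm (Fin m)} :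
    p ∈ simpleInfl π m ↔ p.1 ∈ MS n m ∧ IsSimplePerm p.2 ∧ Monotone (p.2 ∘ p.1 ∘ π.symm) := by
  simp [simpleInfl]

theorem partB {n : ℕ} (hn : 2 ≤ n) (π : Equiv.Perm (Fin n)) :
    ∑ m ∈ Finset.Icc 3 n, (simpleInfl π m).card
      = if (cuts π = ∅ ∧ cuts (π.trans Fin.revPerm) = ∅) then 1 else 0 := by
  split_ifs with h
  · rw [← Finset.card_sigma]
    refine le_antisymm ?_ ?_
    · rw [Finset.card_le_one]
      rintro ⟨m, f, σ⟩ h1 ⟨m', f', σ'⟩ h2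
      rw [Finset.mem_sigma, mem_simpleInfl, Finset.mem_Icc] at h1 h2
      obtain ⟨⟨hm, _⟩, hf, hσ, hinf⟩ := h1
      obtain ⟨⟨hm', _⟩, hf', hσ', hinf'⟩ := h2
      simp only at *
      have k1 : ∀ x y, f x = f y → f' x = f' y := fun x y =>
        ker_imp hm hm' hf hinf hσ' hf' hinf'
      have k2 : ∀ x y, f' x = f' y → f x = f y := fun x y =>
        ker_imp hm' hm hf' hinf' hσ hf hinf
      have : m = m' := le_antisymm (MS_le_of_ker hf k2) (MS_le_of_ker hf' k1)
      subst this
      have : f = f' := MS_ext hf hf' fun x y => ⟨k1 x y, k2 x y⟩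
      subst this
      have : σ = σ' := sigma_unique hf hinf hinf'
      subst this
      rfl
    · obtain ⟨m, hm, hmn, f, hf, σ, hσ, hinf⟩ := exists_simple hn h.1 h.2
      rw [Nat.one_le_iff_ne_zero, Finset.card_ne_zero]
      exact ⟨⟨m, f, σ⟩, Finset.mem_sigma.2 ⟨Finset.mem_Icc.2 ⟨hm, hmn⟩,
        mem_simpleInfl.2 ⟨hf, hσ, hinf⟩⟩⟩
  · refine Finset.sum_eq_zero fun m hm => ?_
    rw [Finset.card_eq_zero, Finset.eq_empty_iff_forall_notMem]
    rintro ⟨f, σ⟩ hp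
    obtain ⟨hf, hσ, hinf⟩ := mem_simpleInfl.1 hp
    have hm3 := (Finset.mem_Icc.1 hm).1
    exact h ⟨cuts_empty_of_simple hm3 hσ hf hinf,
      cuts_empty_of_simple hm3 (simple_rev hσ) hf (infl_rev hinf)⟩

open Classical in
theorem card_infl_sum {n m : ℕ} (f : Fin n → Fin m) (σ : Equiv.Perm (Fin m)) :
    (∑ π : Equiv.Perm (Fin n), if Monotone (σ ∘ f ∘ π.symm) then (1 : ZMod 3) else 0)
      = ∏ k, ((fibCard f k).factorial : ZMod 3) := by
  rw [Finset.sum_boole, ← Fintype.card_subtype, count_infl]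
  push_cast
  rfl

open Classical PowerSeries in
theorem total_sum {n : ℕ} (hn : 1 ≤ n) :
    (∑ π : Equiv.Perm (Fin n), if (cuts π).Nonempty then (1 : ZMod 3) else 0)
      = ∑ m ∈ Finset.Icc 2 n, (-1) ^ m * PowerSeries.coeff n ((X - X ^ 2 : (ZMod 3)⟦X⟧) ^ m) := by
  have h1 : ∀ π : Equiv.Perm (Fin n), (if (cuts π).Nonempty then (1 : ZMod 3) else 0)
      = ∑ m ∈ Finset.Icc 2 n, (-1) ^ m *
        ∑ f ∈ MS n m, if Monotone (f ∘ π.symm) then (1 : ZMod 3) else 0 := by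
    intro π
    have := congrArg (Int.cast : ℤ → ZMod 3) (partA hn π)
    push_cast at this
    rw [← this]
    refine Finset.sum_congr rfl fun m _ => ?_
    rw [Finset.sum_boole]
  rw [Finset.sum_congr rfl fun π _ => h1 π, Finset.sum_comm]
  refine Finset.sum_congr rfl fun m _ => ?_
  rw [← Finset.mul_sum, Finset.sum_comm, ← sum_MS]
  congr 1
  refine Finset.sum_congr rfl fun f _ => ?_
  exact card_infl_sum f (Equiv.refl _)

open Classical PowerSeries in
theorem total_simple {n : ℕ} (m : ℕ) :
    (∑ π : Equiv.Perm (Fin n), ((simpleInfl π m).card : ZMod 3))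
      = (simpleCount m : ZMod 3) * PowerSeries.coeff n ((X - X ^ 2 : (ZMod 3)⟦X⟧) ^ m) := by
  have h1 : ∀ π : Equiv.Perm (Fin n), ((simpleInfl π m).card : ZMod 3)
      = ∑ f ∈ MS n m, ∑ σ : Equiv.Perm (Fin m), if IsSimplePerm σ then
          (if Monotone (σ ∘ f ∘ π.symm) then (1 : ZMod 3) else 0) else 0 := by
    intro π
    unfold simpleInfl
    rw [← Finset.sum_boole, Finset.sum_product]
    refine Finset.sum_congr rfl fun f _ => Finset.sum_congr rfl fun σ _ => ?_
    rw [ite_and]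
  rw [Finset.sum_congr rfl fun π _ => h1 π, Finset.sum_comm, ← sum_MS, Finset.mul_sum]
  refine Finset.sum_congr rfl fun f _ => ?_
  rw [Finset.sum_comm]
  have h2 : ∀ σ : Equiv.Perm (Fin m), (∑ π : Equiv.Perm (Fin n), if IsSimplePerm σ then
          (if Monotone (σ ∘ f ∘ π.symm) then (1 : ZMod 3) else 0) else 0)
      = if IsSimplePerm σ then ∏ k, ((fibCard f k).factorial : ZMod 3) else 0 := by
    intro σ
    split_ifs with h
    · exact card_infl_sum f σ
    · simp
  rw [Finset.sum_congr rfl fun σ _ => h2 σ, ← Finset.sum_filter, Finset.sum_const, nsmul_eq_mul]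
  congr 2
  rw [simpleCount, Nat.card_eq_fintype_card, Fintype.card_subtype]

theorem pointwise {n : ℕ} (hn : 2 ≤ n) (π : Equiv.Perm (Fin n)) :
    (1 : ZMod 3) = (if (cuts π).Nonempty then (1 : ZMod 3) else 0)
      + (if (cuts (π.trans Fin.revPerm)).Nonempty then (1 : ZMod 3) else 0)
      + ∑ m ∈ Finset.Icc 3 n, ((simpleInfl π m).card : ZMod 3) := by
  rw [← Nat.cast_sum, partB hn π]
  by_cases h1 : (cuts π).Nonempty
  · have h2 : ¬ (cuts (π.trans Fin.revPerm)).Nonempty := fun h => cuts_disjoint h1 h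
    have h3 : cuts π ≠ ∅ := Finset.nonempty_iff_ne_empty.1 h1
    simp [h1, h2, h3]
  · have h3 : cuts π = ∅ := Finset.not_nonempty_iff_eq_empty.1 h1
    by_cases h2 : (cuts (π.trans Fin.revPerm)).Nonempty
    · have h4 : cuts (π.trans Fin.revPerm) ≠ ∅ := Finset.nonempty_iff_ne_empty.1 h2
      simp [h1, h2, h4]
    · have h4 : cuts (π.trans Fin.revPerm) = ∅ := Finset.not_nonempty_iff_eq_empty.1 h2
      simp [h3, h4]

noncomputable def bCoef (m : ℕ) : ZMod 3 :=
  if m < 2 then 0 else 2 * (-1) ^ m + if 3 ≤ m then (simpleCount m : ZMod 3) else 0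

open PowerSeries in
theorem main_identity (n : ℕ) (hn : 2 ≤ n) :
    ∑ m ∈ Finset.Icc 2 n, bCoef m * PowerSeries.coeff n ((X - X ^ 2 : (ZMod 3)⟦X⟧) ^ m)
      = (n.factorial : ZMod 3) := by
  have h1 : (n.factorial : ZMod 3) = ∑ _π : Equiv.Perm (Fin n), (1 : ZMod 3) := by
    simp [Fintype.card_perm]
  have hrev : (∑ π : Equiv.Perm (Fin n),
        if (cuts (π.trans Fin.revPerm)).Nonempty then (1 : ZMod 3) else 0)
      = ∑ π : Equiv.Perm (Fin n), if (cuts π).Nonempty then (1 : ZMod 3) else 0 :=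
    Equiv.sum_comp (Equiv.mulLeft (Fin.revPerm : Equiv.Perm (Fin n)))
      (fun π => if (cuts π).Nonempty then (1 : ZMod 3) else 0)
  rw [h1, Finset.sum_congr rfl fun π _ => pointwise hn π, Finset.sum_add_distrib,
    Finset.sum_add_distrib, hrev, total_sum (by omega), Finset.sum_comm,
    Finset.sum_congr rfl fun m _ => total_simple m]
  have h3 : ∑ m ∈ Finset.Icc 3 n, (simpleCount m : ZMod 3) *
        PowerSeries.coeff n ((X - X ^ 2 : (ZMod 3)⟦X⟧) ^ m)
      = ∑ m ∈ Finset.Icc 2 n, (if 3 ≤ m then (simpleCount m : ZMod 3) else 0) *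
        PowerSeries.coeff n ((X - X ^ 2 : (ZMod 3)⟦X⟧) ^ m) := by
    have : ∑ m ∈ Finset.Icc 3 n, (simpleCount m : ZMod 3) *
        PowerSeries.coeff n ((X - X ^ 2 : (ZMod 3)⟦X⟧) ^ m)
      = ∑ m ∈ Finset.Icc 3 n, (if 3 ≤ m then (simpleCount m : ZMod 3) else 0) *
        PowerSeries.coeff n ((X - X ^ 2 : (ZMod 3)⟦X⟧) ^ m) := by
      refine Finset.sum_congr rfl fun m hm => ?_
      rw [if_pos (Finset.mem_Icc.1 hm).1]
    rw [this]
    refine Finset.sum_subset ?_ ?_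
    · intro m; simp only [Finset.mem_Icc]; omega
    · intro m hm hm'
      simp only [Finset.mem_Icc] at hm hm'
      rw [if_neg (by omega), zero_mul]
  rw [h3, ← Finset.sum_add_distrib, ← Finset.sum_add_distrib]
  refine Finset.sum_congr rfl fun m hm => ?_
  unfold bCoef
  rw [if_neg (by have := (Finset.mem_Icc.1 hm).1; omega)]
  ring

/-- For `n > 2`, `sₙ ≡ -C_{n-1} + (-1)ⁿ (mod 3)` where `C_{n-1}` is the `(n-1)`-st
Catalan number. -/
theorem simpleCount_congruent_catalan_mod_three (n : ℕ) (hn : 2 < n) :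
    (simpleCount n : ℤ) ≡ -(catalan (n - 1) : ℤ) + (-1 : ℤ) ^ n [ZMOD (3 : ℤ)] := by
  have h := series_solve bCoef (by simp [bCoef]) (by simp [bCoef]) main_identity n (by omega)
  unfold bCoef at h
  rw [if_neg (by omega), if_pos (by omega)] at h
  apply (ZMod.intCast_eq_intCast_iff _ _ 3).1
  push_cast
  have h3 : (3 : ZMod 3) = 0 := by decide
  linear_combination h - (-1) ^ n * h3
end
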